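/- For every even m ≥ 2 and every n > m, TC_n(ℝP^m) = TC^β_n(ℝP^m) = TC^Σ_n(ℝP^m) = nm+1, where ℝP^m is real projective m-space. -/

import Mathlib

open unitInterval

noncomputable section

/-- The point `j/(n-1)` of the unit interval, for `j : Fin n`.
These are the `n` evaluation points `0, 1/(n-1), …, (n-2)/(n-1), 1`. -/
def evalPt (n : ℕ) (j : Fin n) : unitInterval :=
  ⟨(j : ℝ) / ((n : ℝ) - 1), by
    have hn : 1 ≤ n := j.pos
    rcases eq_or_lt_of_le hn with h | h
    · have hn1 : n = 1 := h.symm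
      subst hn1
      simp [Fin.fin_one_eq_zero j]
    · have h1 : (0 : ℝ) < (n : ℝ) - 1 := by
        have : (1 : ℝ) < (n : ℝ) := by exact_mod_cast h
        linarith
      constructor
      · exact div_nonneg (Nat.cast_nonneg _) h1.le
      · rw [div_le_one h1]
        have hj : (j : ℕ) + 1 ≤ n := j.is_lt
        have : ((j : ℕ) : ℝ) + 1 ≤ (n : ℝ) := by exact_mod_cast hj
        linarith⟩

/-- Coordinate reversal (the involution `β`) on `n`-tuples:
`β·(x_1,…,x_n) = (x_n,…,x_1)`. -/
def rtuple {X : Type*} {n : ℕ} (x : Fin n → X) : Fin n → X := fun j => x j.rev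

/-- Path reversal (the involution `β`) on the free path space `C(I,X)`:
`(β·γ)(t) = γ(1-t)`. -/
def rpath {X : Type*} [TopologicalSpace X] (γ : C(unitInterval, X)) : C(unitInterval, X) :=
  γ.comp ⟨unitInterval.symm, unitInterval.continuous_symm⟩

/-- `X^n` can be covered by `k` open sets, on each of which there is a continuous
section of the evaluation map `e_n : C(I,X) → X^n`,
`γ ↦ (γ(0), γ(1/(n-1)), …, γ(1))`. -/
def HasPlanners (X : Type*) [TopologicalSpace X] (n k : ℕ) : Prop :=
  ∃ U : Fin k → Set (Fin n → X),
    (∀ i, IsOpen (U i)) ∧ (⋃ i, U i) = Set.univ ∧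
    (∀ i, ∃ s : C(U i, C(unitInterval, X)),
      ∀ x : U i, ∀ j : Fin n, s x (evalPt n j) = (x : Fin n → X) j)

/-- The `n`-th (ordinary, higher) topological complexity `TC_n(X)`, as a value in `ℕ∞`. -/
def TCn (X : Type*) [TopologicalSpace X] (n : ℕ) : ℕ∞ :=
  sInf {k : ℕ∞ | ∃ m : ℕ, (m : ℕ∞) = k ∧ HasPlanners X n m}

/-- `X^n` can be covered by `k` β-invariant open sets, on each of which there is a
continuous β-equivariant section of the evaluation map `e_n : C(I,X) → X^n`
(a bidirectional motion planner). -/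
def HasBidirPlanners (X : Type*) [TopologicalSpace X] (n k : ℕ) : Prop :=
  ∃ U : Fin k → Set (Fin n → X),
    (∀ i, IsOpen (U i)) ∧ (⋃ i, U i) = Set.univ ∧
    (∀ i, ∀ x ∈ U i, rtuple x ∈ U i) ∧
    (∀ i, ∃ s : C(U i, C(unitInterval, X)),
      (∀ x : U i, ∀ j : Fin n, s x (evalPt n j) = (x : Fin n → X) j) ∧
      (∀ x : U i, ∀ hx : rtuple (x : Fin n → X) ∈ U i,
        s ⟨rtuple (x : Fin n → X), hx⟩ = rpath (s x)))

/-- The `n`-th bidirectional topological complexity `TC^β_n(X)`, as a value in `ℕ∞`. -/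
def TCbeta (X : Type*) [TopologicalSpace X] (n : ℕ) : ℕ∞ :=
  sInf {k : ℕ∞ | ∃ m : ℕ, (m : ℕ∞) = k ∧ HasBidirPlanners X n m}

/-- The action of a permutation `sg ∈ Σ_n` on `n`-tuples (by permuting coordinates). -/
def permTuple {X : Type*} {n : ℕ} (sg : Equiv.Perm (Fin n)) (x : Fin n → X) : Fin n → X :=
  fun j => x (sg j)

/-- `X^n` can be covered by `k` `Σ_n`-invariant open sets, on each of which there is a
continuous `Σ_n`-equivariant section of `E_n : X^{J_n} → X^n`,
`(α_1,…,α_n) ↦ (α_1(1),…,α_n(1))`, where `X^{J_n}` is the space of `n`-tuples of paths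
with a common initial point. -/
def HasSymPlanners (X : Type*) [TopologicalSpace X] (n k : ℕ) : Prop :=
  ∃ U : Fin k → Set (Fin n → X),
    (∀ i, IsOpen (U i)) ∧ (⋃ i, U i) = Set.univ ∧
    (∀ i, ∀ sg : Equiv.Perm (Fin n), ∀ x ∈ U i, permTuple sg x ∈ U i) ∧
    (∀ i, ∃ s : C(U i, Fin n → C(unitInterval, X)),
      (∀ x : U i, ∀ j j' : Fin n, s x j 0 = s x j' 0) ∧
      (∀ x : U i, ∀ j : Fin n, s x j 1 = (x : Fin n → X) j) ∧
      (∀ x : U i, ∀ sg : Equiv.Perm (Fin n),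
        ∀ hx : permTuple sg (x : Fin n → X) ∈ U i,
        s ⟨permTuple sg (x : Fin n → X), hx⟩ = permTuple sg (s x)))

/-- The `n`-th symmetrized topological complexity `TC^Σ_n(X)`, as a value in `ℕ∞`. -/
def TCsym (X : Type*) [TopologicalSpace X] (n : ℕ) : ℕ∞ :=
  sInf {k : ℕ∞ | ∃ m : ℕ, (m : ℕ∞) = k ∧ HasSymPlanners X n m}

/-- The unit sphere `S^m ⊂ ℝ^{m+1}`. -/
abbrev Sph (m : ℕ) : Type :=
  Metric.sphere (0 : EuclideanSpace ℝ (Fin (m + 1))) 1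

end
noncomputable section

/-- The antipodal setoid on the sphere `S^m`, identifying `x` with `-x`. -/
def antipodalSetoid (m : ℕ) : Setoid (Sph m) where
  r x y := (x : EuclideanSpace ℝ (Fin (m + 1))) = (y : EuclideanSpace ℝ (Fin (m + 1))) ∨
    (x : EuclideanSpace ℝ (Fin (m + 1))) = -(y : EuclideanSpace ℝ (Fin (m + 1)))
  iseqv := by
    constructor
    · intro x; exact Or.inl rfl
    · intro x y h
      rcases h with h | h
      · exact Or.inl h.symm
      · exact Or.inr (by rw [h, neg_neg])
    · intro x y z h1 h2
      rcases h1 with h1 | h1 <;> rcases h2 with h2 | h2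
      · exact Or.inl (h1.trans h2)
      · exact Or.inr (h1.trans h2)
      · exact Or.inr (by rw [h1, h2])
      · exact Or.inl (by rw [h1, h2, neg_neg])

/-- Real projective `m`-space, the quotient of the unit sphere `S^m ⊂ ℝ^{m+1}`
by the antipodal involution. -/
def RP (m : ℕ) : Type := Quotient (antipodalSetoid m)

instance (m : ℕ) : TopologicalSpace (RP m) := instTopologicalSpaceQuotient

end

/-!
Upper bound: order all coordinates of the lifts of `n` points of `ℝP^m` to the sphere by absolute
value. On the `k`-th stratum, where exactly `n + k` coordinates are larger than all the others and
every point contributes one of them, the signs of the large coordinates are locally constant. They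
give a vector near each point, determined up to the same sign as its lift, hence a path from a base
point, and these choices are symmetric. There are `nm + 1` strata.

Lower bound: a section over `U` moves the lift `y_0` along the path to a lift of the `i`-th point,
and comparison with `y_i` gives a real function `f` of the lifts, nonzero over `U`, with
`f (γ • y) = γ_i γ_0 f y`. Each of `nm` sets of a cover contributes such a function, for an index
`i ≠ 0` of our choice. These functions have a common zero on `(S^m)^n`, since the product
`∏ i ≠ 0, (a_0 + a_i)^(k_i)` of their classes in `H^*((ℝP^m)^n; ℤ/2)` does not vanish: take
`k_i = m + 1` for `1 ≤ i ≤ m`, possible as `m < n`, and `k_i = m` for the others; then the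
coefficient of the top class is `(m + 1)^m`, which is odd. This nonvanishing is proved on a cubical
grid, by taking cap products of a mod 2 chain with sign labellings of the vertices.
-/

namespace HigherTC

open Finset Topology

noncomputable section

/-! ### Mod 2 chains on a cubical grid -/

section Chains

variable {P : Type*}

/-- Mod 2 chains on a cubical grid in `ℝ^P`, given by their coefficients. A cell is encoded by its
center `F : P → ℤ`: an even coordinate `F p` stands for the point `F p`, an odd one for the open
interval `(F p - 1, F p + 1)`. -/
abbrev Chain (P : Type*) : Type _ := (P → ℤ) → ZMod 2

lemma even_smul_iff (δ : P → ℤˣ) (F : P → ℤ) (p : P) : Even ((δ • F) p) ↔ Even (F p) := by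
  rcases Int.units_eq_one_or (δ p) with h | h <;> simp [h]

lemma odd_coe_units (u : ℤˣ) : Odd (u : ℤ) := by
  rcases Int.units_eq_one_or u with rfl | rfl <;> decide

/-- `IsFace F G` says that the cell `F` is contained in the closure of the cell `G`. -/
def IsFace (F G : P → ℤ) : Prop := ∀ p, G p = F p ∨ Even (F p) ∧ |G p - F p| = 1

lemma IsFace.refl (F : P → ℤ) : IsFace F F := fun _ => Or.inl rfl

lemma IsFace.abs_sub_le {F G : P → ℤ} (h : IsFace F G) (p : P) : |G p - F p| ≤ 1 := by
  rcases h p with h | ⟨-, h⟩ <;> simp [h]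

lemma IsFace.trans {F G H : P → ℤ} (h : IsFace F G) (h' : IsFace G H) : IsFace F H := by
  intro p
  have hp := h p
  have hp' := h' p
  grind

lemma sum_moves_smul [Fintype P] {M : Type*} [AddCommMonoid M] (δ : P → ℤˣ) (t : P × ℤˣ → M) :
    ∑ x : P × ℤˣ, t (x.1, δ x.1 * x.2) = ∑ x, t x :=
  (Equiv.prodShear (Equiv.refl P) fun p => Equiv.mulLeft (δ p)).sum_comp t

variable [DecidableEq P]

/-- The unit displacement in the direction `x = (p, u)`. When `F p` is even, `F + step (p, u)` is
a cell having `F` as a facet, and every such cell arises in this way. -/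
def step (x : P × ℤˣ) : P → ℤ := Pi.single x.1 (x.2 : ℤ)

@[simp] lemma step_same (p : P) (u : ℤˣ) : step (p, u) p = u := Pi.single_eq_same _ _

@[simp] lemma step_of_ne {p q : P} (h : q ≠ p) (u : ℤˣ) : step (p, u) q = 0 :=
  Pi.single_eq_of_ne h _

lemma step_neg (p : P) (u : ℤˣ) : step (p, -u) = -step (p, u) := by
  simp only [step, Units.val_neg, Pi.single_neg]

lemma smul_step (δ : P → ℤˣ) (p : P) (u : ℤˣ) : δ • step (p, u) = step (p, δ p * u) := by
  funext q
  rcases eq_or_ne q p with rfl | h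
  · simp [Units.smul_def]
  · simp [h]

lemma isFace_add_step {F : P → ℤ} {x : P × ℤˣ} (h : Even (F x.1)) : IsFace F (F + step x) := by
  intro q
  rcases eq_or_ne q x.1 with rfl | hq
  · right
    rcases Int.units_eq_one_or x.2 with hu | hu <;> simp [h, step, hu]
  · simp [step, hq]

variable [Fintype P]

/-- The cellular boundary operator: the coefficient of a cell `F` in `boundary v` is the sum of
the coefficients of `v` over the cells having `F` as a facet. -/
def boundary : Chain P →+ Chain P where
  toFun v F := ∑ x : P × ℤˣ, if Even (F x.1) then v (F + step x) else 0
  map_zero' := by simp only [Pi.zero_apply, ite_self, sum_const_zero]; rfl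
  map_add' v w := by
    funext F
    simp only [Pi.add_apply, ← sum_add_distrib, ← ite_add_zero]

lemma boundary_apply (v : Chain P) (F : P → ℤ) :
    boundary v F = ∑ x : P × ℤˣ, if Even (F x.1) then v (F + step x) else 0 := rfl

lemma sum_sum_eq_zero_of_symm {α : Type*} [Fintype α] (t : α → α → ZMod 2)
    (symm : ∀ x y, t x y = t y x) (diag : ∀ x, t x x = 0) : ∑ x, ∑ y, t x y = 0 := by
  classical
  rw [← Fintype.sum_prod_type' t]
  refine sum_involution (fun z _ => z.swap) (fun z _ => ?_) (fun z _ hz h => hz ?_)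
    (fun _ _ => mem_univ _) (fun z _ => z.swap_swap)
  · rw [Prod.fst_swap, Prod.snd_swap, symm, CharTwo.add_self_eq_zero]
  · rw [← congrArg Prod.fst h, Prod.fst_swap, diag]

lemma boundary_boundary (v : Chain P) : boundary (boundary v) = 0 := by
  funext F
  have even_pair (x y : P × ℤˣ) : Even (F x.1) ∧ Even ((F + step x) y.1) ↔
      x.1 ≠ y.1 ∧ Even (F x.1) ∧ Even (F y.1) := by
    obtain ⟨⟨p, u⟩, q, w⟩ := x, y
    rcases eq_or_ne p q with rfl | h
    · simp only [Pi.add_apply, step_same, ne_eq, not_true, false_and, iff_false, not_and]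
      exact fun hp => Int.not_even_iff_odd.mpr (hp.add_odd (odd_coe_units u))
    · simp [h, h.symm]
  have expand : boundary (boundary v) F = ∑ x : P × ℤˣ, ∑ y : P × ℤˣ,
      if x.1 ≠ y.1 ∧ Even (F x.1) ∧ Even (F y.1) then v (F + step x + step y) else 0 := by
    simp only [boundary_apply, ← even_pair, ite_and]
    refine sum_congr rfl fun x _ => ?_
    split_ifs <;> simp
  rw [expand]
  refine sum_sum_eq_zero_of_symm _ (fun x y => ?_) (fun x => by simp)
  simp only [add_right_comm F (step y), ne_comm (a := y.1), and_comm (a := Even (F y.1))]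

lemma boundary_smul (δ : P → ℤˣ) (v : Chain P) (F : P → ℤ) :
    boundary v (δ • F) = boundary (fun G => v (δ • G)) F := by
  simp only [boundary_apply]
  rw [← sum_moves_smul δ]
  refine sum_congr rfl fun x _ => ?_
  rw [smul_add, smul_step]
  simp only [even_smul_iff]

/-- The commutator of the boundary and the multiplication by `g`. It plays the role of the cap
product with the coboundary of the `0`-cochain `g`, see `cap_apply`. -/
def cap (g v : Chain P) : Chain P := g * boundary v + boundary (g * v)

lemma cap_apply (g v : Chain P) (F : P → ℤ) : cap g v F =
    ∑ x : P × ℤˣ, if Even (F x.1) then (g F + g (F + step x)) * v (F + step x) else 0 := by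
  simp only [cap, Pi.add_apply, Pi.mul_apply, boundary_apply, mul_sum, ← sum_add_distrib,
    mul_ite, mul_zero, ← ite_add_zero, add_mul]

lemma exists_move_of_cap_ne_zero {g v : Chain P} {F : P → ℤ} (h : cap g v F ≠ 0) :
    ∃ x : P × ℤˣ, Even (F x.1) ∧ g F ≠ g (F + step x) ∧ v (F + step x) ≠ 0 := by
  rw [cap_apply] at h
  obtain ⟨x, -, hx⟩ := exists_ne_zero_of_sum_ne_zero h
  have hx' := ite_ne_right_iff.mp hx
  exact ⟨x, hx'.1, fun e => hx'.2 (by rw [e, CharTwo.add_self_eq_zero, zero_mul]),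
    right_ne_zero_of_mul hx'.2⟩

lemma cap_add_left (g g' v : Chain P) : cap (g + g') v = cap g v + cap g' v := by
  simp only [cap, add_mul, map_add]
  abel

lemma cap_add_right (g v w : Chain P) : cap g (v + w) = cap g v + cap g w := by
  simp only [cap, mul_add, map_add]
  abel

lemma boundary_cap (g v : Chain P) : boundary (cap g v) = cap g (boundary v) := by
  simp only [cap, map_add, boundary_boundary, mul_zero, zero_add, add_zero]

/-- The iterated cap product, in which the head of the list acts last. -/
def capList (gs : List (Chain P)) (v : Chain P) : Chain P := gs.foldr cap v

@[simp] lemma capList_cons (g : Chain P) (gs : List (Chain P)) (v : Chain P) :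
    capList (g :: gs) v = cap g (capList gs v) := rfl

lemma boundary_capList {v : Chain P} (hv : boundary v = 0) (gs : List (Chain P)) :
    boundary (capList gs v) = 0 := by
  induction gs with
  | nil => exact hv
  | cons g gs ih => rw [capList_cons, boundary_cap, ih, cap, map_zero, mul_zero, map_zero, add_zero]

end Chains

/-! ### Products of cubical spheres -/

section SphereCells

variable {ι κ : Type*} {K : ℕ}

/-- The cells of the boundary of the cube `[-2K, 2K]^κ`, which serves as a model of a sphere. -/
def IsSphereCell (K : ℕ) (f : κ → ℤ) : Prop := (∀ a, |f a| ≤ 2 * K) ∧ ∃ a, |f a| = 2 * K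

/-- The cells of a product of spheres: those grid cells of `ℝ^(ι × κ)` all of whose blocks
`F (i, ·)` are sphere cells. -/
def IsProductCell (K : ℕ) (F : ι × κ → ℤ) : Prop := ∀ i, IsSphereCell K (Function.curry F i)

/-- The antipodal action on a product of spheres: the `i`-th block is multiplied by `γ i`. -/
def flipBlocks (γ : ι → ℤˣ) (F : ι × κ → ℤ) : ι × κ → ℤ :=
  (fun p : ι × κ => γ p.1) • F

lemma flipBlocks_flipBlocks (γ δ : ι → ℤˣ) (F : ι × κ → ℤ) :
    flipBlocks γ (flipBlocks δ F) = flipBlocks (γ * δ) F :=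
  smul_smul (fun p : ι × κ => γ p.1) (fun p => δ p.1) F

lemma flipBlocks_mul_self (γ : ι → ℤˣ) (F : ι × κ → ℤ) : flipBlocks (γ * γ) F = F := by
  have : γ * γ = 1 := funext fun i => Int.units_mul_self (γ i)
  rw [this]
  exact one_smul _ F

lemma isSphereCell_units_smul_iff (u : ℤˣ) (f : κ → ℤ) :
    IsSphereCell K (u • f) ↔ IsSphereCell K f := by
  rcases Int.units_eq_one_or u with rfl | rfl <;> simp [IsSphereCell]

lemma isProductCell_flipBlocks_iff (γ : ι → ℤˣ) (F : ι × κ → ℤ) :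
    IsProductCell K (flipBlocks γ F) ↔ IsProductCell K F :=
  forall_congr' fun i => isSphereCell_units_smul_iff (γ i) (Function.curry F i)

lemma IsSphereCell.ne_zero (hK : 0 < K) {f : κ → ℤ} (hf : IsSphereCell K f) : f ≠ 0 := by
  rintro rfl
  obtain ⟨-, a, ha⟩ := hf
  simp only [Pi.zero_apply, abs_zero] at ha
  omega

variable [DecidableEq κ]

lemma IsSphereCell.add_step {f : κ → ℤ} (hf : IsSphereCell K f) {a : κ} (ha : Odd (f a))
    (u : ℤˣ) : IsSphereCell K (f + step (a, u)) := by
  obtain ⟨hle, b, hb⟩ := hf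
  have hba : b ≠ a := by
    rintro rfl
    rw [← Int.not_even_iff_odd, ← even_abs, hb] at ha
    exact ha (even_two_mul _)
  refine ⟨fun c => ?_, b, by simpa [hba] using hb⟩
  rcases eq_or_ne c a with rfl | hc
  · have := abs_le.mp (hle c)
    rw [Pi.add_apply, step_same, abs_le]
    obtain ⟨k, hk⟩ := ha
    rcases Int.units_eq_one_or u with rfl | rfl <;> simp only [Units.val_one, Units.val_neg] <;>
      constructor <;> omega
  · simpa [hc] using hle c

variable [DecidableEq ι]

lemma curry_add_step_same (F : ι × κ → ℤ) (i : ι) (a : κ) (u : ℤˣ) :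
    Function.curry (F + step ((i, a), u)) i = Function.curry F i + step (a, u) := by
  funext b
  simp [step, Pi.single_apply]

lemma curry_add_step_of_ne (F : ι × κ → ℤ) {i j : ι} (h : j ≠ i) (a : κ) (u : ℤˣ) :
    Function.curry (F + step ((i, a), u)) j = Function.curry F j := by
  funext b
  simp [step, h]

lemma flipBlocks_add_step (γ : ι → ℤˣ) (F : ι × κ → ℤ) (x : (ι × κ) × ℤˣ) :
    flipBlocks γ (F + step x) = flipBlocks γ F + step (x.1, γ x.1.1 * x.2) := by
  rw [flipBlocks, smul_add, ← flipBlocks]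
  exact congrArg _ (smul_step _ _ _)

lemma IsProductCell.add_step {F : ι × κ → ℤ} (hF : IsProductCell K F) {p : ι × κ}
    (hp : Odd (F p)) (u : ℤˣ) : IsProductCell K (F + step (p, u)) := by
  intro j
  rcases eq_or_ne j p.1 with rfl | h
  · rw [curry_add_step_same]
    exact (hF p.1).add_step hp u
  · rw [curry_add_step_of_ne F h]
    exact hF j

lemma isProductCell_of_add_step {F : ι × κ → ℤ} {x : (ι × κ) × ℤˣ} (hx : Even (F x.1))
    (h : IsProductCell K (F + step x)) : IsProductCell K F := by
  have hodd : Odd ((F + step x) x.1) := by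
    rw [Pi.add_apply, step_same]
    exact hx.add_odd (odd_coe_units x.2)
  have := h.add_step hodd (-x.2)
  rwa [step_neg, add_neg_cancel_right] at this

end SphereCells

section FundamentalChain

variable {ι κ : Type*} [Fintype κ] {K : ℕ}

/-- The sum of the top-dimensional cells of the cube `[-2K, 2K]^κ`. -/
def cubeChain (K : ℕ) : Chain κ := fun f => if ∀ a, Odd (f a) ∧ |f a| ≤ 2 * K then 1 else 0

lemma cubeChain_smul (δ : κ → ℤˣ) (f : κ → ℤ) : cubeChain K (δ • f) = cubeChain K f := by
  have (a : κ) : Odd ((δ • f) a) ∧ |(δ • f) a| ≤ 2 * K ↔ Odd (f a) ∧ |f a| ≤ 2 * K := by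
    rcases Int.units_eq_one_or (δ a) with h | h <;> simp [h]
  simp only [cubeChain, this]

variable [DecidableEq κ]

/-- The fundamental cycle of the boundary of the cube `[-2K, 2K]^κ`. -/
def sphereChain (K : ℕ) : Chain κ := boundary (cubeChain K)

lemma sphereChain_smul (u : ℤˣ) (f : κ → ℤ) : sphereChain K (u • f) = sphereChain K f := by
  refine (boundary_smul (fun _ => u) _ f).trans ?_
  simp only [cubeChain_smul]
  rfl

lemma isSphereCell_of_sphereChain_ne_zero {f : κ → ℤ} (h : sphereChain K f ≠ 0) :
    IsSphereCell K f := by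
  rw [sphereChain, boundary_apply] at h
  refine ⟨fun a => ?_, ?_⟩
  · obtain ⟨⟨b, u⟩, -, hb⟩ := exists_ne_zero_of_sum_ne_zero h
    obtain ⟨hb, hcube⟩ : Even (f b) ∧ _ := ite_ne_right_iff.mp hb
    have ha := ((ite_ne_right_iff.mp hcube).1 a).2
    rcases eq_or_ne a b with rfl | hab
    · rw [Pi.add_apply, step_same, abs_le] at ha
      rw [abs_le]
      obtain ⟨k, hk⟩ := hb
      rcases Int.units_eq_one_or u with rfl | rfl <;>
        simp only [Units.val_one, Units.val_neg] at ha <;>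
        constructor <;> omega
    · simpa [hab] using ha
  · by_contra! hne
    refine h ?_
    rw [Fintype.sum_prod_type]
    refine sum_eq_zero fun a _ => ?_
    -- away from the faces of the cube, the two cells adjacent to `f` in direction `a` cancel
    have adjacent (ha : Even (f a)) :
        cubeChain K (f + step (a, -1)) = cubeChain K (f + step (a, 1)) := by
      refine if_congr (forall_congr' fun b => ?_) rfl rfl
      rcases eq_or_ne b a with rfl | hba
      · have := hne b
        obtain ⟨k, hk⟩ := ha
        simp only [Pi.add_apply, step_same, Units.val_one, Units.val_neg, hk]
        grind
      · simp [hba]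
    by_cases ha : Even (f a)
    · simp [ha, adjacent ha, UnitsInt.univ, CharTwo.add_self_eq_zero]
    · simp [ha]

lemma sphereChain_eq_one {f : κ → ℤ} (hK : 0 < K) {b : κ} (hb : f b = 2 * K)
    (hf : ∀ a ≠ b, Odd (f a) ∧ |f a| ≤ 2 * K) : sphereChain K f = 1 := by
  have hb_even : Even (f b) := hb ▸ even_two_mul _
  rw [sphereChain, boundary_apply, Fintype.sum_eq_single (b, -1)]
  · rw [if_pos hb_even, cubeChain, if_pos]
    intro a
    rcases eq_or_ne a b with rfl | hab
    · simp only [Pi.add_apply, step_same, hb, Units.val_neg, Units.val_one, abs_le]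
      refine ⟨(even_two_mul _).add_odd (by decide), by omega⟩
    · simpa [hab] using hf a hab
  · rintro ⟨a, u⟩ hau
    refine ite_eq_right_iff.mpr fun ha => if_neg fun hcube => ?_
    have hab : a = b := by
      by_contra hab
      exact Int.not_even_iff_odd.mpr (hf a hab).1 ha
    subst hab
    have hu : u = 1 := (Int.units_eq_one_or u).resolve_right fun hu => hau (by rw [hu])
    have := (hcube a).2
    rw [Pi.add_apply, step_same, hb, hu, Units.val_one, abs_le] at this
    omega

variable [Fintype ι]

/-- The fundamental cycle of a product of spheres, one for each `i : ι`. -/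
def productChain (K : ℕ) : Chain (ι × κ) := fun F => ∏ i, sphereChain K (Function.curry F i)

lemma productChain_flipBlocks (γ : ι → ℤˣ) (F : ι × κ → ℤ) :
    productChain K (flipBlocks γ F) = productChain K F :=
  prod_congr rfl fun i _ => sphereChain_smul (γ i) (Function.curry F i)

lemma isProductCell_of_productChain_ne_zero {F : ι × κ → ℤ} (h : productChain K F ≠ 0) :
    IsProductCell K F := fun i =>
  isSphereCell_of_sphereChain_ne_zero (prod_ne_zero_iff.mp h i (mem_univ i))

variable [DecidableEq ι]

lemma boundary_productChain : boundary (productChain K : Chain (ι × κ)) = 0 := by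
  funext F
  have split (i : ι) (a : κ) (u : ℤˣ) : productChain K (F + step ((i, a), u)) =
      sphereChain K (Function.curry F i + step (a, u)) *
        ∏ j ∈ univ.erase i, sphereChain K (Function.curry F j) := by
    rw [productChain, ← mul_prod_erase univ _ (mem_univ i), curry_add_step_same]
    congr 1
    exact prod_congr rfl fun j hj => by rw [curry_add_step_of_ne F (ne_of_mem_erase hj)]
  have blocks : boundary (productChain K) F =
      ∑ i, boundary (sphereChain K) (Function.curry F i) *
        ∏ j ∈ univ.erase i, sphereChain K (Function.curry F j) := by
    simp only [boundary_apply, Fintype.sum_prod_type, split, ← ite_zero_mul, sum_mul]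
    rfl
  rw [blocks]
  simp only [sphereChain, boundary_boundary, Pi.zero_apply, zero_mul, sum_const_zero]

end FundamentalChain

/-! ### Invariant chains and twisted labellings -/

section Invariant

variable {ι κ : Type*} {K : ℕ}

/-- Chains of a product of spheres that come from the product of projective spaces: they are
supported on product cells and invariant under the antipodal action. -/
structure IsInvariantChain (K : ℕ) (v : Chain (ι × κ)) : Prop where
  isProductCell : ∀ {F}, v F ≠ 0 → IsProductCell K F
  apply_flipBlocks : ∀ γ F, v (flipBlocks γ F) = v F

/-- Labellings of the cells of a product of spheres by `ZMod 2` that change under the antipodal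
action by the character `c`. The coboundary of such a labelling is a `1`-cocycle on the product of
projective spaces, whose cohomology class is `c`. -/
def IsTwisted (K : ℕ) (c : (ι → ℤˣ) → ZMod 2) (g : Chain (ι × κ)) : Prop :=
  ∀ γ F, IsProductCell K F → g (flipBlocks γ F) = g F + c γ

lemma IsTwisted.add {c d : (ι → ℤˣ) → ZMod 2} {g h : Chain (ι × κ)} (hg : IsTwisted K c g)
    (hh : IsTwisted K d h) : IsTwisted K (c + d) (g + h) := by
  intro γ F hF
  rw [Pi.add_apply, hg γ F hF, hh γ F hF, add_add_add_comm]
  rfl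

lemma IsInvariantChain.mul {g v : Chain (ι × κ)} (hg : IsTwisted K 0 g)
    (hv : IsInvariantChain K v) : IsInvariantChain K (g * v) where
  isProductCell h := hv.isProductCell (right_ne_zero_of_mul h)
  apply_flipBlocks γ F := by
    rw [Pi.mul_apply, Pi.mul_apply, hv.apply_flipBlocks]
    by_cases hF : v F = 0
    · rw [hF, mul_zero, mul_zero]
    · rw [hg γ F (hv.isProductCell hF), Pi.zero_apply, add_zero]

lemma isInvariantChain_productChain [Fintype ι] [Fintype κ] [DecidableEq κ] :
    IsInvariantChain K (productChain K : Chain (ι × κ)) :=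
  ⟨isProductCell_of_productChain_ne_zero, productChain_flipBlocks⟩

variable [Fintype ι] [DecidableEq ι] [Fintype κ] [DecidableEq κ]

lemma IsInvariantChain.cap {c : (ι → ℤˣ) → ZMod 2} {g v : Chain (ι × κ)} (hg : IsTwisted K c g)
    (hv : IsInvariantChain K v) : IsInvariantChain K (cap g v) where
  isProductCell h :=
    have ⟨_, hx, _, hne⟩ := exists_move_of_cap_ne_zero h
    isProductCell_of_add_step hx (hv.isProductCell hne)
  apply_flipBlocks γ F := by
    rw [cap_apply, cap_apply, ← sum_moves_smul fun p : ι × κ => γ p.1]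
    refine sum_congr rfl fun x _ => if_ctx_congr (even_smul_iff _ F x.1) (fun hx => ?_)
      (fun _ => rfl)
    rw [← flipBlocks_add_step, hv.apply_flipBlocks]
    by_cases hne : v (F + step x) = 0
    · rw [hne, mul_zero, mul_zero]
    · have hcell := hv.isProductCell hne
      rw [hg γ _ hcell, hg γ F (isProductCell_of_add_step hx hcell), add_add_add_comm,
        CharTwo.add_self_eq_zero (c γ), add_zero]

lemma IsInvariantChain.capList {v : Chain (ι × κ)} (hv : IsInvariantChain K v)
    {cs : List ((ι → ℤˣ) → ZMod 2)} {gs : List (Chain (ι × κ))}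
    (h : List.Forall₂ (IsTwisted K) cs gs) : IsInvariantChain K (capList gs v) := by
  induction h with
  | nil => exact hv
  | cons hg _ ih => exact ih.cap hg

/-- Two chains that become homologous on the product of projective spaces. -/
def Homologous (K : ℕ) (v w : Chain (ι × κ)) : Prop :=
  ∃ b, IsInvariantChain K b ∧ v = w + boundary b

lemma Homologous.refl (v : Chain (ι × κ)) : Homologous K v v :=
  ⟨0, ⟨fun h => (h rfl).elim, fun _ _ => rfl⟩, by rw [map_zero, add_zero]⟩

lemma Homologous.trans {v w x : Chain (ι × κ)} (h : Homologous K v w) (h' : Homologous K w x) :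
    Homologous K v x := by
  obtain ⟨⟨a, ha, rfl⟩, b, hb, rfl⟩ := h, h'
  refine ⟨b + a, ⟨fun {F} hF => ?_, fun γ F => ?_⟩, by rw [map_add, add_assoc]⟩
  · by_cases hbF : b F = 0
    · rw [Pi.add_apply, hbF, zero_add] at hF
      exact ha.isProductCell hF
    · exact hb.isProductCell hbF
  · rw [Pi.add_apply, Pi.add_apply, ha.apply_flipBlocks, hb.apply_flipBlocks]

lemma Homologous.cap {c : (ι → ℤˣ) → ZMod 2} {g v w : Chain (ι × κ)} (hg : IsTwisted K c g)
    (h : Homologous K v w) : Homologous K (cap g v) (cap g w) := by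
  obtain ⟨b, hb, rfl⟩ := h
  exact ⟨HigherTC.cap g b, hb.cap hg, by rw [cap_add_right, boundary_cap]⟩

lemma homologous_cap_of_isTwisted {c : (ι → ℤˣ) → ZMod 2} {g h v : Chain (ι × κ)}
    (hg : IsTwisted K c g) (hh : IsTwisted K c h) (hv : IsInvariantChain K v)
    (hcycle : boundary v = 0) : Homologous K (cap g v) (cap h v) := by
  have hgh : IsTwisted K 0 (h + g) := by
    have := hh.add hg
    rwa [CharTwo.add_self_eq_zero] at this
  refine ⟨(h + g) * v, hv.mul hgh, ?_⟩
  have hb : boundary ((h + g) * v) = cap (h + g) v := by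
    rw [cap, hcycle, mul_zero, zero_add]
  rw [hb, cap_add_left, ← add_assoc, CharTwo.add_self_eq_zero, zero_add]

lemma homologous_capList {cs : List ((ι → ℤˣ) → ZMod 2)} {gs hs : List (Chain (ι × κ))}
    (hgs : List.Forall₂ (IsTwisted K) cs gs) (hhs : List.Forall₂ (IsTwisted K) cs hs)
    {v : Chain (ι × κ)} (hv : IsInvariantChain K v) (hcycle : boundary v = 0) :
    Homologous K (capList gs v) (capList hs v) := by
  induction hgs generalizing hs with
  | nil => cases hhs; exact .refl v
  | cons hg _ ih =>
    cases hhs with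
    | cons hh hhs => exact ((ih hhs).cap hg).trans (homologous_cap_of_isTwisted hg hh
        (hv.capList hhs) (boundary_capList hcycle _))

end Invariant

/-! ### A fundamental domain -/

section LeadSign

variable {κ : Type*} [LinearOrder κ] {f : κ → ℤ} {a b : κ}

/-- `a` is the last index at which `f` does not vanish. -/
def IsLeading (f : κ → ℤ) (a : κ) : Prop := f a ≠ 0 ∧ ∀ b > a, f b = 0

lemma exists_isLeading [Finite κ] (hf : f ≠ 0) : ∃ a, IsLeading f a := by
  obtain ⟨a, ha, hmax⟩ := wellFounded_gt.has_min {a | f a ≠ 0} (Function.ne_iff.mp hf)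
  exact ⟨a, ha, fun b hb => not_not.mp fun hfb => hmax b hfb hb⟩

lemma IsLeading.eq (ha : IsLeading f a) (hb : IsLeading f b) : a = b :=
  le_antisymm (not_lt.mp fun h => ha.1 (hb.2 a h)) (not_lt.mp fun h => hb.1 (ha.2 b h))

lemma IsLeading.units_smul (h : IsLeading f a) (u : ℤˣ) : IsLeading (u • f) a := by
  rcases Int.units_eq_one_or u with rfl | rfl <;> simpa [IsLeading] using h

open Classical in
/-- The sign of the last nonzero value of `f`, with the junk value `1` if `f = 0`. The blocks with
leading sign `1` form a fundamental domain of the antipodal action. -/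
def leadSign (f : κ → ℤ) : ℤˣ := if ∃ a, IsLeading f a ∧ f a < 0 then -1 else 1

lemma IsLeading.coe_leadSign (h : IsLeading f a) : (leadSign f : ℤ) = (f a).sign := by
  have hiff : (∃ b, IsLeading f b ∧ f b < 0) ↔ f a < 0 :=
    ⟨fun ⟨b, hb, hlt⟩ => h.eq hb ▸ hlt, fun hlt => ⟨a, h, hlt⟩⟩
  rw [leadSign, hiff]
  split_ifs with hlt
  · rw [Int.sign_eq_neg_one_of_neg hlt, Units.val_neg, Units.val_one]
  · rw [Int.sign_eq_one_of_pos (lt_of_le_of_ne (not_lt.mp hlt) h.1.symm), Units.val_one]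

lemma leadSign_units_smul [Finite κ] (hf : f ≠ 0) (u : ℤˣ) :
    leadSign (u • f) = u * leadSign f := by
  obtain ⟨a, ha⟩ := exists_isLeading hf
  ext
  rw [(ha.units_smul u).coe_leadSign, Units.val_mul, ha.coe_leadSign, Pi.smul_apply,
    Units.smul_def, smul_eq_mul, Int.sign_mul]
  rcases Int.units_eq_one_or u with rfl | rfl <;> rfl

end LeadSign

section FundamentalVertices

variable {ι κ : Type*} [LinearOrder κ] {K : ℕ}

/-- The leading signs of the blocks of `F`. -/
def leadSigns (F : ι × κ → ℤ) (i : ι) : ℤˣ := leadSign (Function.curry F i)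

lemma leadSigns_flipBlocks [Finite κ] (hK : 0 < K) {F : ι × κ → ℤ} (hF : IsProductCell K F)
    (γ : ι → ℤˣ) : leadSigns (flipBlocks γ F) = γ * leadSigns F :=
  funext fun i => leadSign_units_smul ((hF i).ne_zero hK) (γ i)

lemma leadSigns_flipBlocks_leadSigns [Finite κ] (hK : 0 < K) {F : ι × κ → ℤ}
    (hF : IsProductCell K F) : leadSigns (flipBlocks (leadSigns F) F) = 1 := by
  rw [leadSigns_flipBlocks hK hF]
  exact funext fun i => Int.units_mul_self _

variable [DecidableEq ι]

/-- The other end of the edge that starts at the vertex `z.1` in the direction `z.2`, moved to the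
fundamental domain, together with the direction of the same edge seen from there. -/
def oppositeEnd (z : (ι × κ → ℤ) × ((ι × κ) × ℤˣ)) : (ι × κ → ℤ) × ((ι × κ) × ℤˣ) :=
  let G := z.1 + step z.2 + step z.2
  (flipBlocks (leadSigns G) G, z.2.1, leadSigns G z.2.1.1 * -z.2.2)

lemma oppositeEnd_edge (z : (ι × κ → ℤ) × ((ι × κ) × ℤˣ)) :
    (oppositeEnd z).1 + step (oppositeEnd z).2 =
      flipBlocks (leadSigns (z.1 + step z.2 + step z.2)) (z.1 + step z.2) := by
  obtain ⟨F, p, u⟩ := z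
  have := flipBlocks_add_step (leadSigns (F + step (p, u) + step (p, u)))
    (F + step (p, u) + step (p, u)) (p, -u)
  rw [step_neg, add_neg_cancel_right] at this
  exact this.symm

lemma isProductCell_add_step_add_step {F : ι × κ → ℤ} {x : (ι × κ) × ℤˣ} (hx : Even (F x.1))
    (h : IsProductCell K (F + step x)) : IsProductCell K (F + step x + step x) := by
  refine h.add_step ?_ x.2
  rw [Pi.add_apply, step_same]
  exact hx.add_odd (odd_coe_units x.2)

lemma oppositeEnd_oppositeEnd [Finite κ] (hK : 0 < K) {z : (ι × κ → ℤ) × ((ι × κ) × ℤˣ)}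
    (hz : leadSigns z.1 = 1) (heven : Even (z.1 z.2.1)) (hcell : IsProductCell K (z.1 + step z.2)) :
    oppositeEnd (oppositeEnd z) = z := by
  have hF := isProductCell_of_add_step heven hcell
  have back : (oppositeEnd z).1 + step (oppositeEnd z).2 + step (oppositeEnd z).2 =
      flipBlocks (leadSigns (z.1 + step z.2 + step z.2)) z.1 := by
    obtain ⟨F, p, u⟩ := z
    have := flipBlocks_add_step (leadSigns (F + step (p, u) + step (p, u)))
      (F + step (p, u)) (p, -u)
    rw [step_neg, add_neg_cancel_right, ← oppositeEnd_edge (F, p, u)] at this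
    exact this.symm
  have signs : leadSigns ((oppositeEnd z).1 + step (oppositeEnd z).2 + step (oppositeEnd z).2) =
      leadSigns (z.1 + step z.2 + step z.2) := by
    rw [back, leadSigns_flipBlocks hK hF, hz, mul_one]
  refine Prod.ext ?_ (Prod.ext rfl ?_)
  · change flipBlocks (leadSigns _) _ = z.1
    rw [signs, back, flipBlocks_flipBlocks, flipBlocks_mul_self]
  · change leadSigns _ z.2.1.1 * -(leadSigns _ z.2.1.1 * -z.2.2) = z.2.2
    rw [signs, mul_neg, mul_neg, mul_neg, neg_neg, ← mul_assoc, Int.units_mul_self, one_mul]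

lemma oppositeEnd_ne {z : (ι × κ → ℤ) × ((ι × κ) × ℤˣ)} (heven : Even (z.1 z.2.1)) :
    oppositeEnd z ≠ z := by
  obtain ⟨F, p, u⟩ := z
  intro h
  have hu : leadSigns (F + step (p, u) + step (p, u)) p.1 * -u = u :=
    congrArg (fun z => z.2.2) h
  have hγ : leadSigns (F + step (p, u) + step (p, u)) p.1 = -1 := by
    rw [mul_neg, ← neg_mul] at hu
    exact neg_eq_iff_eq_neg.mp (mul_eq_right.mp hu)
  have hF : -F p + -u + -u = F p := by
    simpa [oppositeEnd, flipBlocks, hγ] using congrFun (congrArg Prod.fst h) p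
  obtain ⟨k, hk⟩ := heven
  obtain ⟨l, hl⟩ := odd_coe_units u
  simp only at hk
  omega

variable [Fintype ι] [Fintype κ]

/-- The vertices of a fundamental domain of the antipodal action on a product of spheres. -/
def fundamentalVertices (K : ℕ) : Finset (ι × κ → ℤ) :=
  open Classical in {F ∈ Fintype.piFinset fun _ => Icc (-(2 * K : ℤ)) (2 * K) |
    IsProductCell K F ∧ (∀ p, Even (F p)) ∧ leadSigns F = 1}

lemma mem_fundamentalVertices {F : ι × κ → ℤ} : F ∈ fundamentalVertices K ↔
    IsProductCell K F ∧ (∀ p, Even (F p)) ∧ leadSigns F = 1 := by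
  classical
  rw [fundamentalVertices, mem_filter, and_iff_right_of_imp]
  rintro ⟨hF, -⟩
  exact Fintype.mem_piFinset.mpr fun p => mem_Icc.mpr (abs_le.mp ((hF p.1).1 p.2))

lemma oppositeEnd_fst_mem_fundamentalVertices (hK : 0 < K) {z : (ι × κ → ℤ) × ((ι × κ) × ℤˣ)}
    (heven : ∀ p, Even (z.1 p)) (hcell : IsProductCell K (z.1 + step z.2)) :
    (oppositeEnd z).1 ∈ fundamentalVertices K := by
  have hG := isProductCell_add_step_add_step (heven _) hcell
  refine mem_fundamentalVertices.mpr ⟨(isProductCell_flipBlocks_iff _ _).mpr hG, fun p => ?_,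
    leadSigns_flipBlocks_leadSigns hK hG⟩
  refine (even_smul_iff _ _ p).mpr ?_
  rw [Pi.add_apply, Pi.add_apply, add_assoc]
  exact (heven p).add (Even.add_self _)

/-- The total coefficient of a chain at the vertices of the fundamental domain. On invariant
`0`-chains it is the augmentation of the product of projective spaces. -/
def vertexSum (K : ℕ) : Chain (ι × κ) →+ ZMod 2 where
  toFun v := ∑ F ∈ fundamentalVertices K, v F
  map_zero' := sum_const_zero
  map_add' _ _ := sum_add_distrib

-- Every edge of the quotient has two ends, which cancel: they are swapped by `oppositeEnd`.
lemma vertexSum_boundary (hK : 0 < K) {v : Chain (ι × κ)} (hv : IsInvariantChain K v) :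
    vertexSum K (boundary v) = 0 := by
  let edges : Finset ((ι × κ → ℤ) × ((ι × κ) × ℤˣ)) :=
    {z ∈ fundamentalVertices K ×ˢ univ | v (z.1 + step z.2) ≠ 0}
  have mem_edges {z} : z ∈ edges ↔ z.1 ∈ fundamentalVertices K ∧ v (z.1 + step z.2) ≠ 0 := by
    rw [mem_filter, mem_product, and_iff_left (mem_univ _)]
  have hsum : vertexSum K (boundary v) = ∑ z ∈ edges, v (z.1 + step z.2) := by
    rw [sum_filter_ne_zero, sum_product]
    refine sum_congr rfl fun F hF => sum_congr rfl fun x _ => if_pos ?_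
    exact (mem_fundamentalVertices.mp hF).2.1 x.1
  have edge (z) : v ((oppositeEnd z).1 + step (oppositeEnd z).2) = v (z.1 + step z.2) := by
    rw [oppositeEnd_edge, hv.apply_flipBlocks]
  have even {z} (hz : z ∈ edges) : ∀ p, Even (z.1 p) :=
    (mem_fundamentalVertices.mp (mem_edges.mp hz).1).2.1
  have cell {z} (hz : z ∈ edges) : IsProductCell K (z.1 + step z.2) :=
    hv.isProductCell (mem_edges.mp hz).2
  rw [hsum]
  refine sum_involution (fun z _ => oppositeEnd z) (fun z _ => ?_)
    (fun z hz _ => oppositeEnd_ne (even hz _)) (fun z hz => mem_edges.mpr ⟨?_, ?_⟩)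
    (fun z hz => oppositeEnd_oppositeEnd hK ?_ (even hz _) (cell hz))
  · rw [edge, CharTwo.add_self_eq_zero]
  · exact oppositeEnd_fst_mem_fundamentalVertices hK (even hz) (cell hz)
  · exact (edge z).trans_ne (mem_edges.mp hz).2
  · exact (mem_fundamentalVertices.mp (mem_edges.mp hz).1).2.2

lemma vertexSum_eq_of_homologous (hK : 0 < K) {v w : Chain (ι × κ)} (h : Homologous K v w) :
    vertexSum K v = vertexSum K w := by
  obtain ⟨b, hb, rfl⟩ := h
  rw [map_add, vertexSum_boundary hK hb, add_zero]

end FundamentalVertices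

/-! ### Sign changes of the leading coefficients -/

section Degree

variable {m : ℕ} {f : Fin (m + 1) → ℤ} {a : Fin (m + 1)}

/-- The last index at which `f` does not vanish, with the junk value `0` if `f = 0`. -/
def degree (f : Fin (m + 1) → ℤ) : ℕ := ({a | f a ≠ 0} : Finset (Fin (m + 1))).sup Fin.val

lemma degree_le (f : Fin (m + 1) → ℤ) : degree f ≤ m :=
  Finset.sup_le fun a _ => a.is_le

lemma IsLeading.degree_eq (h : IsLeading f a) : degree f = a := by
  refine le_antisymm (Finset.sup_le fun b hb => ?_) (le_sup (f := Fin.val) (by simpa using h.1))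
  exact not_lt.mp fun hab => (mem_filter.mp hb).2 (h.2 b hab)

lemma sign_add_units {k : ℤ} (hk : Even k) (h0 : k ≠ 0) (u : ℤˣ) : (k + u).sign = k.sign := by
  have h2 : 2 ≤ |k| := Int.le_of_dvd (abs_pos.mpr h0) ((dvd_abs 2 k).mpr hk.two_dvd)
  rcases Int.units_eq_one_or u with rfl | rfl <;> rcases le_abs.mp h2 with h | h
  all_goals simp only [Units.val_one, Units.val_neg]
  · rw [Int.sign_eq_one_of_pos (by omega), Int.sign_eq_one_of_pos (by omega)]
  · rw [Int.sign_eq_neg_one_of_neg (by omega), Int.sign_eq_neg_one_of_neg (by omega)]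
  · rw [Int.sign_eq_one_of_pos (by omega), Int.sign_eq_one_of_pos (by omega)]
  · rw [Int.sign_eq_neg_one_of_neg (by omega), Int.sign_eq_neg_one_of_neg (by omega)]

lemma isLeading_of_leadSign_add_step_ne (hf : f ≠ 0) (ha : Even (f a)) {u : ℤˣ}
    (h : leadSign (f + step (a, u)) ≠ leadSign f) :
    degree f < a ∧ IsLeading (f + step (a, u)) a ∧ leadSign (f + step (a, u)) = u := by
  obtain ⟨b, hb⟩ := exists_isLeading hf
  have keep (hab : a ≤ b) (hsign : (f b + step (a, u) b).sign = (f b).sign) :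
      leadSign (f + step (a, u)) = leadSign f := by
    have hb' : IsLeading (f + step (a, u)) b := by
      refine ⟨fun h0 => hb.1 ?_, fun c hc => ?_⟩
      · rwa [← Int.sign_eq_zero_iff_zero, ← hsign, Int.sign_eq_zero_iff_zero]
      · simp [hb.2 c hc, (hab.trans_lt hc).ne']
    ext
    rw [hb'.coe_leadSign, hb.coe_leadSign, Pi.add_apply, hsign]
  rcases lt_trichotomy a b with hab | rfl | hba
  · exact absurd (keep hab.le (by simp [hab.ne'])) h
  · refine absurd (keep le_rfl ?_) h
    rw [step_same]
    exact sign_add_units ha hb.1 u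
  · have hlead : IsLeading (f + step (a, u)) a := by
      refine ⟨?_, fun c hc => ?_⟩
      · simp [hb.2 a hba]
      · simp [hb.2 c (hba.trans hc), hc.ne']
    refine ⟨hb.degree_eq ▸ hba, hlead, Units.ext ?_⟩
    rw [hlead.coe_leadSign, Pi.add_apply, hb.2 a hba, step_same, zero_add]
    rcases Int.units_eq_one_or u with rfl | rfl <;> rfl

end Degree

section SignClass

variable {ι : Type*}

/-- The sign of a unit, written additively. -/
def signBit (u : ℤˣ) : ZMod 2 := if u = 1 then 0 else 1

lemma signBit_mul : ∀ u v : ℤˣ, signBit (u * v) = signBit u + signBit v := by decide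

/-- The character of the antipodal action that is nontrivial on the factors `i` and `o`. Under the
identification of characters with first cohomology classes it is the sum of the generators of
these two factors. -/
def signClass (o i : ι) (γ : ι → ℤˣ) : ZMod 2 := signBit (γ i * γ o)

lemma signClass_mul (o i : ι) (γ δ : ι → ℤˣ) :
    signClass o i (γ * δ) = signClass o i γ + signClass o i δ := by
  rw [signClass, Pi.mul_apply, Pi.mul_apply, mul_mul_mul_comm, signBit_mul]
  rfl

lemma exists_ne_of_signClass_ne {o i : ι} {γ δ : ι → ℤˣ} (h : signClass o i γ ≠ signClass o i δ) :
    ∃ l, (l = i ∨ l = o) ∧ δ l ≠ γ l := by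
  by_contra! hc
  exact h (by rw [signClass, signClass, hc i (.inl rfl), hc o (.inr rfl)])

end SignClass

section Reference

variable {ι : Type*} {m K : ℕ} {o i : ι}

/-- The labelling in the class `signClass o i` that is given by the leading signs. -/
def leadLabel {κ : Type*} [LinearOrder κ] (o i : ι) : Chain (ι × κ) :=
  fun F => signClass o i (leadSigns F)

lemma isTwisted_leadLabel {κ : Type*} [LinearOrder κ] [Finite κ] (hK : 0 < K) (o i : ι) :
    IsTwisted K (signClass o i) (leadLabel o i : Chain (ι × κ)) := fun γ F hF => by
  rw [leadLabel, leadLabel, leadSigns_flipBlocks hK hF, signClass_mul, add_comm]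

lemma forall₂_isTwisted_leadLabel {κ : Type*} [LinearOrder κ] [Finite κ] (hK : 0 < K)
    (L : List ι) : List.Forall₂ (IsTwisted K) (L.map (signClass o))
      (L.map (leadLabel (κ := κ) o)) :=
  List.forall₂_map_left_iff.mpr <| List.forall₂_map_right_iff.mpr <|
    List.forall₂_same.mpr fun i _ => isTwisted_leadLabel hK o i

/-- The sum of the degrees of the blocks of `F`. -/
def totalDegree [Fintype ι] (F : ι × Fin (m + 1) → ℤ) : ℕ := ∑ i, degree (Function.curry F i)

lemma totalDegree_le [Fintype ι] (F : ι × Fin (m + 1) → ℤ) : totalDegree F ≤ Fintype.card ι * m :=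
  (sum_le_card_nsmul _ _ m fun _ _ => degree_le _).trans_eq (by rw [smul_eq_mul, card_univ])

variable [DecidableEq ι]

lemma isLeading_of_leadLabel_add_step_ne (hK : 0 < K) {F : ι × Fin (m + 1) → ℤ}
    (hF : IsProductCell K F) {x : (ι × Fin (m + 1)) × ℤˣ} (hx : Even (F x.1))
    (h : leadLabel o i F ≠ leadLabel o i (F + step x)) :
    (x.1.1 = i ∨ x.1.1 = o) ∧ leadSigns F x.1.1 ≠ x.2 ∧
      degree (Function.curry F x.1.1) < x.1.2 ∧
      IsLeading (Function.curry (F + step x) x.1.1) x.1.2 := by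
  obtain ⟨⟨l, a⟩, u⟩ := x
  obtain ⟨l', hl', hne⟩ := exists_ne_of_signClass_ne h
  obtain rfl : l' = l := by
    by_contra hll
    exact hne (by rw [leadSigns, leadSigns, curry_add_step_of_ne F hll])
  rw [leadSigns, curry_add_step_same] at hne
  obtain ⟨hdeg, hlead, hsign⟩ := isLeading_of_leadSign_add_step_ne ((hF l').ne_zero hK) hx hne
  exact ⟨hl', fun hu => hne (hsign.trans hu.symm), hdeg,
    (curry_add_step_same F l' a u).symm ▸ hlead⟩

variable [Fintype ι]

lemma totalDegree_add_step {F : ι × Fin (m + 1) → ℤ} {x : (ι × Fin (m + 1)) × ℤˣ}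
    (h : IsLeading (Function.curry (F + step x) x.1.1) x.1.2) :
    totalDegree (F + step x) + degree (Function.curry F x.1.1) = totalDegree F + x.1.2 := by
  obtain ⟨⟨l, a⟩, u⟩ := x
  rw [totalDegree, totalDegree, ← add_sum_erase univ _ (mem_univ l), h.degree_eq,
    ← add_sum_erase univ (fun i => degree (Function.curry F i)) (mem_univ l),
    sum_congr rfl fun j hj => by rw [curry_add_step_of_ne F (ne_of_mem_erase hj)]]
  ring

/-- The iterated cap product of the fundamental cycle with the reference labellings. -/
def leadCap (K : ℕ) (o : ι) (L : List ι) : Chain (ι × Fin (m + 1)) :=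
  capList (L.map (leadLabel o)) (productChain K)

lemma isProductCell_of_leadCap_ne_zero (hK : 0 < K) {L : List ι} {F : ι × Fin (m + 1) → ℤ}
    (h : leadCap K o L F ≠ 0) : IsProductCell K F :=
  (isInvariantChain_productChain.capList (forall₂_isTwisted_leadLabel hK L)).isProductCell h

lemma length_add_totalDegree_le (hK : 0 < K) {L : List ι} {F : ι × Fin (m + 1) → ℤ}
    (h : leadCap K o L F ≠ 0) : L.length + totalDegree F ≤ Fintype.card ι * m := by
  induction L generalizing F with
  | nil => exact (zero_add _).trans_le (totalDegree_le F)
  | cons i L ih =>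
    obtain ⟨x, hx, hlabel, hne⟩ := exists_move_of_cap_ne_zero h
    have hF := isProductCell_of_add_step hx (isProductCell_of_leadCap_ne_zero hK hne)
    obtain ⟨-, -, hdeg, hlead⟩ := isLeading_of_leadLabel_add_step_ne hK hF hx hlabel
    have := totalDegree_add_step hlead
    have := ih hne
    rw [List.length_cons]
    omega

end Reference

/-! ### The cap product with the reference labellings -/

section StandardCells

variable {m K k : ℕ}

/-- The block `(2K, -1, 1, …, (-1)^k, 0, …, 0)`. Its leading sign alternates with `k`, hence
increasing `k` by one is a sign change. -/
def standardBlock (m K k : ℕ) (c : Fin (m + 1)) : ℤ :=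
  if c = 0 then 2 * K else if c ≤ k then (-1) ^ (c : ℕ) else 0

lemma isSphereCell_standardBlock (hK : 0 < K) : IsSphereCell K (standardBlock m K k) := by
  refine ⟨fun c => ?_, 0, ?_⟩
  · rw [standardBlock]
    split_ifs
    · simp
    · rw [abs_neg_one_pow]; omega
    · simp
  · simp [standardBlock]

lemma isLeading_standardBlock (hK : 0 < K) {c : Fin (m + 1)} (hc : (c : ℕ) = k) :
    IsLeading (standardBlock m K k) c := by
  refine ⟨?_, fun b hb => ?_⟩
  · rw [standardBlock, if_pos hc.le]
    split_ifs
    · positivity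
    · exact pow_ne_zero _ (by decide)
  · rw [standardBlock, if_neg (Fin.ne_zero_of_lt hb), if_neg (not_le.mpr (hc ▸ hb))]

lemma leadSign_standardBlock (hK : 0 < K) (hk : k ≤ m) :
    leadSign (standardBlock m K k) = (-1) ^ k := by
  have hc : ((Fin.ofNat (m + 1) k : Fin (m + 1)) : ℕ) = k := Nat.mod_eq_of_lt (by omega)
  ext
  rw [(isLeading_standardBlock hK hc).coe_leadSign, standardBlock, hc, if_pos le_rfl]
  split_ifs with h0
  · rw [Fin.ext_iff, hc] at h0
    rw [Int.sign_eq_one_of_pos (by positivity), h0]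
    rfl
  · rcases Nat.even_or_odd k with h | h <;> simp [h.neg_one_pow]

lemma standardBlock_add_step {c : Fin (m + 1)} (hc : (c : ℕ) = k + 1) :
    standardBlock m K k + step (c, (-1) ^ (k + 1)) = standardBlock m K (k + 1) := by
  have hc0 : c ≠ 0 := fun h => by simp [h] at hc
  funext b
  rcases eq_or_ne b c with rfl | hb
  · simp [standardBlock, hc0, hc]
  · have : (b : ℕ) ≤ k ↔ (b : ℕ) ≤ k + 1 := by
      rw [ne_eq, Fin.ext_iff] at hb
      omega
    simp [standardBlock, hb, this]

lemma sphereChain_standardBlock (hK : 0 < K) : sphereChain K (standardBlock m K m) = 1 := by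
  refine sphereChain_eq_one hK (b := 0) (by simp [standardBlock]) fun c hc => ?_
  rw [standardBlock, if_neg hc, if_pos c.is_le, abs_neg_one_pow]
  exact ⟨odd_neg_one.pow, by omega⟩

lemma degree_standardBlock (hK : 0 < K) (hk : k ≤ m) : degree (standardBlock m K k) = k := by
  have hc : ((Fin.ofNat (m + 1) k : Fin (m + 1)) : ℕ) = k := Nat.mod_eq_of_lt (by omega)
  rw [(isLeading_standardBlock hK hc).degree_eq, hc]

lemma eq_standardBlock_zero {f : Fin (m + 1) → ℤ} (hK : 0 < K) (hf : IsSphereCell K f)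
    (hdeg : degree f = 0) (hsign : leadSign f = 1) : f = standardBlock m K 0 := by
  obtain ⟨a, ha⟩ := exists_isLeading (hf.ne_zero hK)
  obtain rfl : a = 0 := Fin.ext (ha.degree_eq.symm.trans hdeg)
  have hpos : 0 < f 0 := by rw [← Int.sign_eq_one_iff_pos, ← ha.coe_leadSign, hsign]; rfl
  obtain ⟨-, b, hb⟩ := hf
  have hb0 : b = 0 := by
    by_contra hne
    rw [ha.2 b (Fin.pos_of_ne_zero hne), abs_zero] at hb
    omega
  funext c
  rcases eq_or_ne c 0 with rfl | hc
  · rw [standardBlock, if_pos rfl, ← hb, hb0, abs_of_pos hpos]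
  · rw [ha.2 c (Fin.pos_of_ne_zero hc), standardBlock, if_neg hc, if_neg]
    simpa using hc

variable {ι : Type*} {r : ι → ℕ} {l : ι}

/-- The cell whose `i`-th block is the standard block of degree `r i`. -/
def standardCell (m K : ℕ) (r : ι → ℕ) : ι × Fin (m + 1) → ℤ :=
  Function.uncurry fun i => standardBlock m K (r i)

lemma isProductCell_standardCell (hK : 0 < K) : IsProductCell K (standardCell m K r) :=
  fun i => isSphereCell_standardBlock (m := m) (k := r i) hK

lemma productChain_standardCell [Fintype ι] (hK : 0 < K) :
    productChain K (standardCell m K fun _ : ι => m) = 1 :=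
  prod_eq_one fun _ _ => sphereChain_standardBlock hK

lemma totalDegree_standardCell [Fintype ι] (hK : 0 < K) (hr : ∀ i, r i ≤ m) :
    totalDegree (standardCell m K r) = ∑ i, r i :=
  sum_congr rfl fun i _ => degree_standardBlock hK (hr i)

/-- The displacement from the standard cell of degrees `r` to the one whose `l`-th degree is
increased by one. -/
def raise (m : ℕ) (r : ι → ℕ) (l : ι) : (ι × Fin (m + 1)) × ℤˣ :=
  ((l, Fin.ofNat (m + 1) (r l + 1)), (-1) ^ (r l + 1))

lemma val_raise (hl : r l < m) : ((raise m r l).1.2 : ℕ) = r l + 1 :=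
  Nat.mod_eq_of_lt (Nat.succ_lt_succ hl)

lemma even_standardCell_raise (hl : r l < m) : Even (standardCell m K r (raise m r l).1) := by
  have hval := val_raise hl
  have h0 : (raise m r l).1.2 ≠ 0 := fun h => by simp [h] at hval
  change Even (standardBlock m K (r l) (raise m r l).1.2)
  rw [standardBlock, if_neg h0, if_neg (by omega)]
  exact Even.zero

variable [DecidableEq ι]

lemma standardCell_add_step_raise (hl : r l < m) :
    standardCell m K r + step (raise m r l) =
      standardCell m K (Function.update r l (r l + 1)) := by
  refine Function.curry_injective (funext fun j => ?_)
  rcases eq_or_ne j l with rfl | hj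
  · rw [raise, curry_add_step_same]
    exact (standardBlock_add_step (val_raise hl)).trans (by simp [standardCell])
  · rw [raise, curry_add_step_of_ne _ hj]
    simp [standardCell, hj]

end StandardCells

section Evaluation

variable {ι : Type*} [DecidableEq ι] {m K : ℕ} {o i : ι} {L : List ι} {r : ι → ℕ}

lemma leadLabel_add_step_raise (hK : 0 < K) (hr : ∀ j, r j ≤ m) (hio : i ≠ o) {l : ι}
    (hl : l = i ∨ l = o) (hlm : r l < m) :
    leadLabel o i (standardCell m K r) + leadLabel o i (standardCell m K r + step (raise m r l)) =
      1 := by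
  have signs (s : ι → ℕ) (hs : ∀ j, s j ≤ m) :
      leadSigns (standardCell m K s) = fun j => (-1) ^ s j :=
    funext fun j => leadSign_standardBlock hK (hs j)
  have hupdate (j : ι) : Function.update r l (r l + 1) j ≤ m := by
    rw [Function.update_apply]
    split_ifs
    exacts [hlm, hr j]
  have signBit_neg : ∀ u : ℤˣ, signBit u + signBit (-u) = 1 := by decide
  rw [standardCell_add_step_raise hlm, leadLabel, leadLabel, signs r hr, signs _ hupdate,
    signClass, signClass]
  rcases hl with rfl | rfl
  · simp only [Function.update_self, Function.update_of_ne hio.symm, pow_succ, mul_neg, neg_mul,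
      mul_one, signBit_neg]
  · simp only [Function.update_self, Function.update_of_ne hio, pow_succ, mul_neg, mul_one,
      signBit_neg]

variable [Fintype ι]

-- By the bound on the total degree, only the smallest possible increase of a degree contributes.
lemma eq_raise_of_leadLabel_ne (hK : 0 < K) (hr : ∀ j, r j ≤ m)
    (hsum : ∑ j, r j + (L.length + 1) = Fintype.card ι * m) {x : (ι × Fin (m + 1)) × ℤˣ}
    (hx : Even (standardCell m K r x.1))
    (hlabel : leadLabel o i (standardCell m K r) ≠ leadLabel o i (standardCell m K r + step x))
    (hne : leadCap K o L (standardCell m K r + step x) ≠ 0) :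
    (x.1.1 = i ∨ x.1.1 = o) ∧ r x.1.1 < m ∧ x = raise m r x.1.1 := by
  obtain ⟨hl, hsign, hdeg, hlead⟩ :=
    isLeading_of_leadLabel_add_step_ne hK (isProductCell_standardCell hK) hx hlabel
  have hbound := length_add_totalDegree_le hK hne
  have hstep := totalDegree_add_step hlead
  have hdegree : degree (Function.curry (standardCell m K r) x.1.1) = r x.1.1 :=
    degree_standardBlock hK (hr _)
  have hlead_sign : leadSigns (standardCell m K r) x.1.1 = (-1) ^ r x.1.1 :=
    leadSign_standardBlock hK (hr _)
  rw [totalDegree_standardCell hK hr] at hstep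
  have hlm : r x.1.1 < m := by omega
  refine ⟨hl, hlm, Prod.ext (Prod.ext rfl (Fin.ext ?_)) ?_⟩
  · have := x.1.2.is_le
    rw [val_raise hlm]
    omega
  · rw [raise, pow_succ, mul_neg_one, ← hlead_sign]
    exact (Int.units_ne_iff_eq_neg.mp hsign.symm)

lemma leadCap_cons_standardCell (hK : 0 < K) (hr : ∀ j, r j ≤ m) (hio : i ≠ o)
    (hsum : ∑ j, r j + (L.length + 1) = Fintype.card ι * m) :
    leadCap K o (i :: L) (standardCell m K r) =
      (if r i < m then leadCap K o L (standardCell m K (Function.update r i (r i + 1))) else 0) +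
      if r o < m then leadCap K o L (standardCell m K (Function.update r o (r o + 1))) else 0 := by
  have term (l : ι) (hl : l = i ∨ l = o) :
      (if Even (standardCell m K r (raise m r l).1) then
        (leadLabel o i (standardCell m K r) +
          leadLabel o i (standardCell m K r + step (raise m r l))) *
            leadCap K o L (standardCell m K r + step (raise m r l)) else 0) =
        if r l < m then leadCap K o L (standardCell m K (Function.update r l (r l + 1)))
        else 0 := by
    split_ifs with heven hlm hlm
    · rw [leadLabel_add_step_raise hK hr hio hl hlm, one_mul, standardCell_add_step_raise hlm]
    · by_contra hne
      exact hlm (eq_raise_of_leadLabel_ne hK hr hsum heven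
        (fun h => left_ne_zero_of_mul hne (CharTwo.add_eq_zero.mpr h))
        (right_ne_zero_of_mul hne)).2.1
    · exact absurd (even_standardCell_raise hlm) heven
    · rfl
  refine (cap_apply _ _ _).trans ?_
  rw [Fintype.sum_eq_add (raise m r i) (raise m r o) (fun h => hio (congrArg (·.1.1) h)),
    ← term i (.inl rfl), ← term o (.inr rfl)]
  · rfl
  · intro x hx
    by_contra hne
    obtain ⟨heven, hne⟩ := ite_ne_right_iff.mp hne
    obtain ⟨hl, -, h⟩ := eq_raise_of_leadLabel_ne hK hr hsum heven
      (fun h => left_ne_zero_of_mul hne (CharTwo.add_eq_zero.mpr h)) (right_ne_zero_of_mul hne)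
    rcases hl with hl | hl <;> rw [hl] at h
    exacts [hx.1 h, hx.2 h]

/-- The product of binomial coefficients that evaluates `leadCap K o L` at the standard cell of
degrees `r`: it counts the ways to raise the degrees from `r` to `m`, one for each letter of `L`,
where a letter `j` raises the degree of either `j` or `o`. -/
def chooseProd (m : ℕ) (o : ι) (L : List ι) (r : ι → ℕ) : ℕ :=
  ∏ j ∈ univ.erase o, (L.count j).choose (m - r j)

lemma chooseProd_update_base (n : ℕ) : chooseProd m o L (Function.update r o n) =
    chooseProd m o L r :=
  prod_congr rfl fun j hj => by rw [Function.update_of_ne (ne_of_mem_erase hj)]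

lemma chooseProd_cons (hr : r i ≤ m) (hio : i ≠ o) : chooseProd m o (i :: L) r =
    (if r i < m then chooseProd m o L (Function.update r i (r i + 1)) else 0) +
      chooseProd m o L r := by
  have hi : i ∈ univ.erase o := mem_erase.mpr ⟨hio, mem_univ i⟩
  have rest_cons : ∏ j ∈ (univ.erase o).erase i, ((i :: L).count j).choose (m - r j) =
      ∏ j ∈ (univ.erase o).erase i, (L.count j).choose (m - r j) :=
    prod_congr rfl fun j hj => by rw [List.count_cons_of_ne (ne_of_mem_erase hj).symm]
  have rest_update : ∏ j ∈ (univ.erase o).erase i,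
        (L.count j).choose (m - Function.update r i (r i + 1) j) =
      ∏ j ∈ (univ.erase o).erase i, (L.count j).choose (m - r j) :=
    prod_congr rfl fun j hj => by rw [Function.update_of_ne (ne_of_mem_erase hj)]
  simp only [chooseProd, ← mul_prod_erase _ _ hi]
  rw [rest_cons, rest_update, ← ite_zero_mul, ← add_mul, List.count_cons_self,
    Function.update_self]
  congr 1
  split_ifs with him
  · obtain ⟨s, hs⟩ := Nat.exists_eq_add_of_lt him
    rw [show m - r i = s + 1 by omega, show m - (r i + 1) = s by omega, Nat.choose_succ_succ]
  · rw [show m - r i = 0 by omega, Nat.choose_zero_right, Nat.choose_zero_right]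

lemma chooseProd_eq_zero (hr : ∀ j, r j ≤ m) (hoL : o ∉ L) (hro : r o = m)
    (hsum : ∑ j, r j + (L.length + 1) = Fintype.card ι * m) : chooseProd m o L r = 0 := by
  have hcount : ∑ j ∈ univ.erase o, L.count j = L.length := by
    simpa only [Multiset.coe_count, Multiset.coe_card] using
      Multiset.sum_count_eq_card (m := (L : Multiset ι)) (s := univ.erase o) fun j hj =>
        mem_erase.mpr ⟨ne_of_mem_of_not_mem (Multiset.mem_coe.mp hj) hoL, mem_univ j⟩
  have htotal : ∑ j ∈ univ.erase o, (m - r j) + ∑ j, r j = Fintype.card ι * m := by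
    have : ∑ j, (m - r j + r j) = Fintype.card ι * m := by simp [hr]
    rw [← this, sum_add_distrib, ← add_sum_erase univ (fun j => m - r j) (mem_univ o), hro,
      Nat.sub_self, zero_add]
  obtain ⟨j, hj, hlt⟩ : ∃ j ∈ univ.erase o, L.count j < m - r j :=
    exists_lt_of_sum_lt (by omega)
  exact prod_eq_zero hj (Nat.choose_eq_zero_of_lt hlt)

lemma leadCap_standardCell (hK : 0 < K) (hr : ∀ j, r j ≤ m) (hoL : o ∉ L)
    (hsum : ∑ j, r j + L.length = Fintype.card ι * m) :
    leadCap K o L (standardCell m K r) = chooseProd m o L r := by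
  induction L generalizing r with
  | nil =>
    obtain rfl : r = fun _ => m := by
      have hle : ∀ j ∈ univ, r j ≤ m := fun j _ => hr j
      refine funext fun j => (sum_eq_sum_iff_of_le hle).mp ?_ j (mem_univ j)
      simpa using hsum
    refine (productChain_standardCell hK).trans ?_
    simp [chooseProd]
  | cons i L ih =>
    obtain ⟨hio, hoL⟩ : i ≠ o ∧ o ∉ L := by simpa [eq_comm] using hoL
    have raised {l : ι} (hl : r l < m) :
        leadCap K o L (standardCell m K (Function.update r l (r l + 1))) =
          chooseProd m o L (Function.update r l (r l + 1)) := by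
      refine ih (fun j => ?_) hoL ?_
      · rw [Function.update_apply]
        split_ifs
        exacts [hl, hr j]
      · rw [sum_update_of_mem (mem_univ l), sdiff_singleton_eq_erase]
        have := add_sum_erase univ r (mem_univ l)
        rw [List.length_cons] at hsum
        omega
    have base : (if r o < m then
        leadCap K o L (standardCell m K (Function.update r o (r o + 1))) else 0) =
          chooseProd m o L r := by
      split_ifs with hom
      · rw [raised hom, chooseProd_update_base]
      · rw [chooseProd_eq_zero hr hoL (by have := hr o; omega) hsum, Nat.cast_zero]
    rw [leadCap_cons_standardCell hK hr hio hsum, base, chooseProd_cons (hr i) hio, Nat.cast_add]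
    congr 1
    split_ifs with him
    · rw [raised him]
    · rw [Nat.cast_zero]

lemma vertexSum_leadCap (hK : 0 < K) (hoL : o ∉ L) (hlen : L.length = Fintype.card ι * m) :
    vertexSum K (leadCap (m := m) K o L) = ∏ j ∈ univ.erase o, ((L.count j).choose m : ZMod 2) := by
  have hvalue : leadCap K o L (standardCell m K fun _ => 0) =
      ∏ j ∈ univ.erase o, ((L.count j).choose m : ZMod 2) := by
    rw [leadCap_standardCell hK (fun _ => m.zero_le) hoL (by simpa using hlen), chooseProd,
      Nat.cast_prod]
    rfl
  rw [← hvalue]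
  refine sum_eq_single_of_mem _ ?_ fun F hF hne => ?_
  · refine mem_fundamentalVertices.mpr ⟨isProductCell_standardCell hK, fun p => ?_,
      funext fun _ => leadSign_standardBlock hK m.zero_le⟩
    change Even (standardBlock m K 0 p.2)
    rw [standardBlock]
    split_ifs with h0 h1
    · exact even_two_mul _
    · exact absurd (Fin.ext (Nat.le_zero.mp h1)) h0
    · exact Even.zero
  · obtain ⟨hcell, -, hsigns⟩ := mem_fundamentalVertices.mp hF
    by_contra h
    have hdeg : totalDegree F = 0 := by
      have := length_add_totalDegree_le hK h
      omega
    refine hne (Function.curry_injective (funext fun i => ?_))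
    exact eq_standardBlock_zero hK (hcell i) (sum_eq_zero_iff.mp hdeg i (mem_univ i))
      (congrFun hsigns i)

end Evaluation

section Combinatorial

variable {ι κ : Type*} [Fintype ι] [DecidableEq ι] [Fintype κ] [DecidableEq κ] {K : ℕ}

lemma exists_faces_ne_of_capList_ne_zero {gs : List (Chain (ι × κ))} {F : ι × κ → ℤ}
    (h : capList gs (productChain K) F ≠ 0) : IsProductCell K F ∧ ∀ g ∈ gs, ∃ G G',
      IsProductCell K G ∧ IsProductCell K G' ∧ IsFace F G ∧ IsFace F G' ∧ g G ≠ g G' := by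
  induction gs generalizing F with
  | nil => exact ⟨isProductCell_of_productChain_ne_zero h, by simp⟩
  | cons g gs ih =>
    obtain ⟨x, hx, hg, hne⟩ := exists_move_of_cap_ne_zero h
    obtain ⟨hcell, hfaces⟩ := ih hne
    have hF := isProductCell_of_add_step hx hcell
    refine ⟨hF, List.forall_mem_cons.mpr
      ⟨⟨F, F + step x, hF, hcell, .refl F, isFace_add_step hx, hg⟩, fun g' hg' => ?_⟩⟩
    obtain ⟨G, G', hG, hG', hFG, hFG', hne'⟩ := hfaces g' hg'
    exact ⟨G, G', hG, hG', (isFace_add_step hx).trans hFG, (isFace_add_step hx).trans hFG', hne'⟩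

/-- A combinatorial Borsuk–Ulam theorem for products of spheres, in the style of Tucker's lemma. The
condition on binomial coefficients says that the product of the classes `signClass o (c a)` is
nonzero in the top cohomology of the product of projective spaces. -/
theorem exists_common_face_of_isTwisted {α : Type*} [Fintype α] {m : ℕ} (hK : 0 < K) {o : ι}
    {c : α → ι} (hc : ∀ a, c a ≠ o) (hcard : Fintype.card α = Fintype.card ι * m)
    (hodd : ∀ j ≠ o, Odd ((#{a | c a = j}).choose m)) {g : α → Chain (ι × Fin (m + 1))}
    (hg : ∀ a, IsTwisted K (signClass o (c a)) (g a)) :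
    ∃ F, IsProductCell K F ∧ ∀ a, ∃ G G',
      IsProductCell K G ∧ IsProductCell K G' ∧ IsFace F G ∧ IsFace F G' ∧ g a G ≠ g a G' := by
  let L : List ι := univ.toList.map c
  have hoL : o ∉ L := by simpa [L] using hc
  have hlen : L.length = Fintype.card ι * m := by simpa [L] using hcard
  have hcount (j : ι) : L.count j = #{a | c a = j} := by
    rw [← Multiset.coe_count, ← Multiset.map_coe, coe_toList, Multiset.count_map]
    simp only [eq_comm, card_def, filter_val]
  have hgs : List.Forall₂ (IsTwisted K) (L.map (signClass o)) (univ.toList.map g) := by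
    rw [List.map_map, List.forall₂_map_left_iff, List.forall₂_map_right_iff]
    exact List.forall₂_same.mpr fun a _ => hg a
  have hsum : vertexSum K (capList (univ.toList.map g) (productChain K)) ≠ 0 := by
    rw [vertexSum_eq_of_homologous hK (homologous_capList hgs (forall₂_isTwisted_leadLabel hK L)
      isInvariantChain_productChain boundary_productChain), ← leadCap,
      vertexSum_leadCap hK hoL hlen]
    refine prod_ne_zero_iff.mpr fun j hj => ?_
    rw [hcount, ZMod.natCast_ne_zero_iff_odd]
    exact hodd j (ne_of_mem_erase hj)
  obtain ⟨F, -, hF⟩ := exists_ne_zero_of_sum_ne_zero hsum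
  obtain ⟨hcell, hfaces⟩ := exists_faces_ne_of_capList_ne_zero hF
  exact ⟨F, hcell, fun a => hfaces (g a) (List.mem_map_of_mem (mem_toList.mpr (mem_univ a)))⟩

end Combinatorial

/-! ### Projective space -/

section ProjectiveSpace

variable {m n : ℕ}

/-- The quotient map from the sphere to projective space. -/
def toRP (x : Sph m) : RP m := Quotient.mk (antipodalSetoid m) x

/-- The antipodal action on the sphere, whose orbits are the points of projective space. -/
instance : MulAction ℤˣ (Sph m) where
  smul u x := ⟨u • (x : EuclideanSpace ℝ (Fin (m + 1))), by
    rcases Int.units_eq_one_or u with rfl | rfl <;> simp⟩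
  one_smul x := Subtype.ext (one_smul ℤˣ (x : EuclideanSpace ℝ (Fin (m + 1))))
  mul_smul u v x := Subtype.ext (mul_smul u v (x : EuclideanSpace ℝ (Fin (m + 1))))

@[simp] lemma coe_units_smul (u : ℤˣ) (x : Sph m) :
    ((u • x : Sph m) : EuclideanSpace ℝ (Fin (m + 1))) = u • (x : EuclideanSpace ℝ (Fin (m + 1))) :=
  rfl

lemma neg_one_units_smul (x : Sph m) : (-1 : ℤˣ) • x = -x := Subtype.ext (by simp)

instance : ContinuousConstSMul ℤˣ (Sph m) where
  continuous_const_smul u := by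
    rcases Int.units_eq_one_or u with rfl | rfl
    · simpa only [one_smul] using continuous_id'
    · simpa only [neg_one_units_smul] using continuous_neg

instance : IsCancelSMul ℤˣ (Sph m) := isCancelSMul_iff_eq_one_of_smul_eq.mpr fun u x h =>
  (Int.units_eq_one_or u).resolve_right fun hu =>
    ne_neg_of_mem_unit_sphere ℝ x (by rw [← neg_one_units_smul, ← hu, h])

lemma toRP_eq_iff_mem_orbit {x y : Sph m} : toRP x = toRP y ↔ x ∈ MulAction.orbit ℤˣ y := by
  refine (Quotient.eq (r := antipodalSetoid m)).trans ⟨?_, ?_⟩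
  · rintro (h | h)
    · exact ⟨1, Subtype.ext (by simp [h])⟩
    · exact ⟨-1, Subtype.ext (by simp [h])⟩
  · rintro ⟨u, rfl⟩
    rcases Int.units_eq_one_or u with rfl | rfl
    · exact Or.inl (by simp)
    · exact Or.inr (by simp)

lemma isQuotientCoveringMap_toRP : IsQuotientCoveringMap (toRP : Sph m → RP m) ℤˣ :=
  have quotient : IsQuotientMap (toRP : Sph m → RP m) := isQuotientMap_quotient_mk'
  quotient.isQuotientCoveringMap_of_properlyDiscontinuousSMul toRP_eq_iff_mem_orbit

lemma toRP_units_smul (u : ℤˣ) (x : Sph m) : toRP (u • x) = toRP x :=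
  toRP_eq_iff_mem_orbit.mpr (MulAction.mem_orbit x u)

lemma toRP_comp_units_smul (γ : Fin n → ℤˣ) (y : Fin n → Sph m) : toRP ∘ (γ • y) = toRP ∘ y :=
  funext fun i => toRP_units_smul (γ i) (y i)

lemma evalPt_zero [NeZero n] : evalPt n 0 = 0 := Subtype.ext (by simp [evalPt])

/-- The endpoint is that of the lift to the sphere of the path through the chosen points. -/
lemma exists_equivariant_endpoint [NeZero n] {U : Set (Fin n → RP m)}
    (s : C(U, C(unitInterval, RP m)))
    (hs : ∀ x : U, ∀ j, s x (evalPt n j) = (x : Fin n → RP m) j) (i : Fin n) :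
    ∃ e : C({y : Fin n → Sph m | toRP ∘ y ∈ U}, Sph m), (∀ w, toRP (e w) = toRP (w.1 i)) ∧
      ∀ (γ : Fin n → ℤˣ) w w', w'.1 = γ • w.1 → e w' = γ 0 • e w := by
  have cov : IsCoveringMap (toRP : Sph m → RP m) := isQuotientCoveringMap_toRP.isCoveringMap
  let toU : C({y : Fin n → Sph m | toRP ∘ y ∈ U}, U) :=
    ⟨fun w => ⟨toRP ∘ w.1, w.2⟩, Continuous.subtype_mk (continuous_pi fun j =>
      cov.continuous.comp ((continuous_apply j).comp continuous_subtype_val)) _⟩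
  let H : C(unitInterval × {y : Fin n → Sph m | toRP ∘ y ∈ U}, RP m) :=
    ⟨fun p => s (toU p.2) p.1, by fun_prop⟩
  let H₀ : C({y : Fin n → Sph m | toRP ∘ y ∈ U}, Sph m) :=
    ⟨fun w => w.1 0, (continuous_apply 0).comp continuous_subtype_val⟩
  have hH₀ (w) : H (0, w) = toRP (H₀ w) := evalPt_zero (n := n) ▸ hs (toU w) 0
  let Λ := cov.liftHomotopy H H₀ hH₀
  have hΛ (t w) : toRP (Λ (t, w)) = s (toU w) t :=
    congrFun (cov.liftHomotopy_lifts H H₀ hH₀) (t, w)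
  have hΛ₀ (w) : Λ (0, w) = w.1 0 := cov.liftHomotopy_zero H H₀ hH₀ w
  refine ⟨⟨fun w => Λ (evalPt n i, w), by fun_prop⟩, fun w => ?_, fun γ w w' h => ?_⟩
  · exact (hΛ _ w).trans (hs (toU w) i)
  · have hU : toU w' = toU w := Subtype.ext ((congrArg _ h).trans (toRP_comp_units_smul γ w.1))
    refine congrFun (cov.eq_of_comp_eq (g₁ := fun t => Λ (t, w')) (g₂ := fun t => γ 0 • Λ (t, w))
      (by fun_prop) (by fun_prop) (funext fun t => ?_) 0 ?_) (evalPt n i)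
    · simp only [Function.comp_apply, toRP_units_smul, hΛ, hU]
    · simp only [hΛ₀, h, Pi.smul_apply']

lemma inner_units_smul (u v : ℤˣ) (x y : EuclideanSpace ℝ (Fin m)) :
    inner ℝ (u • x) (v • y) = (u * v) • inner ℝ x y := by
  rcases Int.units_eq_one_or u with rfl | rfl <;> rcases Int.units_eq_one_or v with rfl | rfl <;>
    simp

/-- A section over `U` transports the `0`-th lift to the `i`-th point; `f` compares the result with
the `i`-th lift, and is extended by `0` outside `U`. -/
lemma exists_odd_of_section [NeZero n] {U : Set (Fin n → RP m)} (hU : IsOpen U)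
    (s : C(U, C(unitInterval, RP m)))
    (hs : ∀ x : U, ∀ j, s x (evalPt n j) = (x : Fin n → RP m) j) (i : Fin n) :
    ∃ f : (Fin n → Sph m) → ℝ, IsOpen {y | 0 < f y} ∧
      (∀ (γ : Fin n → ℤˣ) y, f (γ • y) = (γ i * γ 0) • f y) ∧
      ∀ y, toRP ∘ y ∈ U → f y ≠ 0 := by
  classical
  obtain ⟨e, he, hesmul⟩ := exists_equivariant_endpoint s hs i
  let W : Set (Fin n → Sph m) := {y | toRP ∘ y ∈ U}
  have hW : IsOpen W := hU.preimage (continuous_pi fun j =>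
    isQuotientCoveringMap_toRP.isCoveringMap.continuous.comp (continuous_apply j))
  let f (y : Fin n → Sph m) : ℝ := if hy : y ∈ W then inner ℝ (y i).1 (e ⟨y, hy⟩).1 else 0
  have hf (w : W) : f w = inner ℝ (w.1 i).1 (e w).1 := dif_pos w.2
  have hf' (y) (hy : y ∉ W) : f y = 0 := dif_neg hy
  refine ⟨f, ?_, fun γ y => ?_, fun y hy => ?_⟩
  · have : {y | 0 < f y} = Subtype.val '' {w : W | (0 : ℝ) < inner ℝ (w.1 i).1 (e w).1} := by
      ext y
      refine ⟨fun h => ?_, ?_⟩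
      · have hy : y ∈ W := by
          by_contra hy
          exact h.ne' (hf' y hy)
        exact ⟨⟨y, hy⟩, (hf ⟨y, hy⟩).subst h, rfl⟩
      · rintro ⟨w, hw, rfl⟩
        exact hw.trans_eq (hf w).symm
    rw [this]
    refine hW.isOpenMap_subtype_val _ (isOpen_lt continuous_const (.inner ?_ ?_))
    · exact continuous_subtype_val.comp ((continuous_apply i).comp continuous_subtype_val)
    · exact continuous_subtype_val.comp e.continuous
  · have hmem : γ • y ∈ W ↔ y ∈ W := by
      simp only [W, Set.mem_ofPred_eq, toRP_comp_units_smul]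
    by_cases hy : y ∈ W
    · rw [hf ⟨y, hy⟩, hf ⟨γ • y, hmem.mpr hy⟩, hesmul γ ⟨y, hy⟩ ⟨γ • y, hmem.mpr hy⟩ rfl,
        ← inner_units_smul]
      rfl
    · rw [hf' y hy, hf' _ (hmem.not.mpr hy), smul_zero]
  · obtain ⟨u, hu⟩ := toRP_eq_iff_mem_orbit.mp (he ⟨y, hy⟩)
    have hu' : (e ⟨y, hy⟩).1 = u • (y i).1 := congrArg Subtype.val hu.symm
    rw [hf ⟨y, hy⟩, hu', ← one_smul ℤˣ (y i).1, smul_smul, inner_units_smul,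
      real_inner_self_eq_norm_sq, norm_eq_of_mem_sphere]
    rcases Int.units_eq_one_or u with rfl | rfl <;> simp

end ProjectiveSpace

/-! ### A Borsuk–Ulam theorem for products of spheres -/

section BorsukUlam

variable {m : ℕ}

lemma norm_normalize_sub_normalize_le {E : Type*} [NormedAddCommGroup E] [NormedSpace ℝ E]
    {x y : E} (hx : x ≠ 0) (hy : y ≠ 0) :
    ‖NormedSpace.normalize x - NormedSpace.normalize y‖ ≤ 2 * ‖x - y‖ / ‖x‖ := by
  have hsplit : ‖x‖ • (NormedSpace.normalize x - NormedSpace.normalize y) =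
      (x - y) + (‖y‖ - ‖x‖) • NormedSpace.normalize y := by
    rw [smul_sub, sub_smul, NormedSpace.norm_smul_normalize, NormedSpace.norm_smul_normalize]
    abel
  rw [le_div_iff₀' (norm_pos_iff.mpr hx)]
  calc ‖x‖ * ‖NormedSpace.normalize x - NormedSpace.normalize y‖
      = ‖(x - y) + (‖y‖ - ‖x‖) • NormedSpace.normalize y‖ := by
        rw [← hsplit, norm_smul, norm_norm]
    _ ≤ ‖x - y‖ + |‖y‖ - ‖x‖| := (norm_add_le _ _).trans_eq <| by
        rw [norm_smul, NormedSpace.norm_normalize hy, mul_one, Real.norm_eq_abs]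
    _ ≤ 2 * ‖x - y‖ := by
        linarith [abs_norm_sub_norm_le y x, norm_sub_rev x y]

/-- The first coordinate vector, as a base point of the sphere. -/
def basePoint (m : ℕ) : Sph m := ⟨EuclideanSpace.single 0 1, by simp⟩

open Classical in
/-- Radial projection onto the sphere; the origin is sent to the base point. -/
def toSphere (v : EuclideanSpace ℝ (Fin (m + 1))) : Sph m :=
  if h : v = 0 then basePoint m else ⟨NormedSpace.normalize v, by simpa using h⟩

lemma coe_toSphere {v : EuclideanSpace ℝ (Fin (m + 1))} (h : v ≠ 0) :
    (toSphere v : EuclideanSpace ℝ (Fin (m + 1))) = NormedSpace.normalize v := by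
  rw [toSphere, dif_neg h]

lemma toSphere_neg {v : EuclideanSpace ℝ (Fin (m + 1))} (h : v ≠ 0) :
    toSphere (-v) = -toSphere v := Subtype.ext <| by
  rw [coe_toSphere (neg_ne_zero.mpr h), coe_neg_sphere, coe_toSphere h, NormedSpace.normalize_neg]

lemma dist_toSphere_le {v w : EuclideanSpace ℝ (Fin (m + 1))} (hv : v ≠ 0) (hw : w ≠ 0) :
    dist (toSphere v) (toSphere w) ≤ 2 * ‖v - w‖ / ‖v‖ := by
  rw [Subtype.dist_eq, coe_toSphere hv, coe_toSphere hw, dist_eq_norm]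
  exact norm_normalize_sub_normalize_le hv hw

variable {ι : Type*} {K : ℕ}

/-- The `i`-th block of a grid point, as a Euclidean vector. -/
def blockVector (F : ι × Fin (m + 1) → ℤ) (i : ι) : EuclideanSpace ℝ (Fin (m + 1)) :=
  WithLp.toLp 2 fun a => (F (i, a) : ℝ)

lemma blockVector_flipBlocks (γ : ι → ℤˣ) (F : ι × Fin (m + 1) → ℤ) (i : ι) :
    blockVector (flipBlocks γ F) i = γ i • blockVector F i := by
  ext a
  rcases Int.units_eq_one_or (γ i) with h | h <;> simp [blockVector, flipBlocks, h]

lemma IsProductCell.le_norm_blockVector {F : ι × Fin (m + 1) → ℤ} (hF : IsProductCell K F)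
    (i : ι) : 2 * K ≤ ‖blockVector F i‖ := by
  obtain ⟨a, ha⟩ := (hF i).2
  refine le_trans (le_of_eq ?_) (PiLp.norm_apply_le (blockVector F i) a)
  rw [blockVector, PiLp.toLp_apply, Real.norm_eq_abs, ← Int.cast_abs]
  exact_mod_cast ha.symm

lemma IsProductCell.blockVector_ne_zero (hK : 0 < K) {F : ι × Fin (m + 1) → ℤ}
    (hF : IsProductCell K F) (i : ι) : blockVector F i ≠ 0 :=
  norm_pos_iff.mp ((by positivity : (0 : ℝ) < 2 * K).trans_le (hF.le_norm_blockVector i))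

lemma IsFace.norm_blockVector_sub_le {F G : ι × Fin (m + 1) → ℤ} (h : IsFace F G) (i : ι) :
    ‖blockVector F i - blockVector G i‖ ≤ m + 1 := by
  have hcoord (a : Fin (m + 1)) : ‖(blockVector F i - blockVector G i) a‖ ≤ 1 := by
    simpa [blockVector, abs_sub_comm] using
      (by exact_mod_cast h.abs_sub_le (i, a) : |(G (i, a) : ℝ) - F (i, a)| ≤ 1)
  refine abs_le_of_sq_le_sq' ?_ (by positivity) |>.2
  calc ‖blockVector F i - blockVector G i‖ ^ 2
      = ∑ a, ‖(blockVector F i - blockVector G i) a‖ ^ 2 := EuclideanSpace.norm_sq_eq _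
    _ ≤ ∑ _a : Fin (m + 1), (1 : ℝ) :=
        sum_le_sum fun a _ => pow_le_one₀ (norm_nonneg _) (hcoord a)
    _ ≤ (m + 1 : ℝ) ^ 2 := by
        simp only [sum_const, card_univ, Fintype.card_fin, nsmul_eq_mul, mul_one]
        push_cast
        nlinarith [(Nat.cast_nonneg m : (0 : ℝ) ≤ m)]

/-- The point of the product of spheres onto which a grid point projects. -/
def gridPoint (F : ι × Fin (m + 1) → ℤ) (i : ι) : Sph m := toSphere (blockVector F i)

lemma gridPoint_flipBlocks (hK : 0 < K) (γ : ι → ℤˣ) {F : ι × Fin (m + 1) → ℤ}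
    (hF : IsProductCell K F) : gridPoint (flipBlocks γ F) = γ • gridPoint F := by
  funext i
  rw [gridPoint, blockVector_flipBlocks, Pi.smul_apply']
  rcases Int.units_eq_one_or (γ i) with h | h
  · simp only [h, one_smul, gridPoint]
  · rw [h, neg_one_units_smul, Units.neg_smul, one_smul,
      toSphere_neg (hF.blockVector_ne_zero hK i), gridPoint]

lemma IsFace.dist_gridPoint_le [Fintype ι] (hK : 0 < K) {F G : ι × Fin (m + 1) → ℤ}
    (h : IsFace F G) (hF : IsProductCell K F) (hG : IsProductCell K G) :
    dist (gridPoint F) (gridPoint G) ≤ (m + 1) / K := by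
  refine (dist_pi_le_iff (by positivity)).mpr fun i => ?_
  calc dist (gridPoint F i) (gridPoint G i)
      ≤ 2 * ‖blockVector F i - blockVector G i‖ / ‖blockVector F i‖ :=
        dist_toSphere_le (hF.blockVector_ne_zero hK i) (hG.blockVector_ne_zero hK i)
    _ ≤ 2 * (m + 1) / (2 * K) := by
        gcongr
        · exact h.norm_blockVector_sub_le i
        · exact hF.le_norm_blockVector i
    _ = (m + 1) / K := mul_div_mul_left _ _ two_ne_zero

/-- The sign of a nonzero real number as an element of `ZMod 2`. -/
def realSignBit (t : ℝ) : ZMod 2 := if t < 0 then 1 else 0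

lemma realSignBit_units_smul (u : ℤˣ) {t : ℝ} (ht : t ≠ 0) :
    realSignBit (u • t) = realSignBit t + signBit u := by
  rcases Int.units_eq_one_or u with rfl | rfl <;> rcases ht.lt_or_gt with h | h <;>
    simp [realSignBit, signBit, h, h.not_gt, CharTwo.add_self_eq_zero]

lemma isOpen_setOf_units_smul_pos {o i : ι} (hi : i ≠ o) {f : (ι → Sph m) → ℝ}
    (hpos : IsOpen {y | 0 < f y}) (hodd : ∀ (γ : ι → ℤˣ) y, f (γ • y) = (γ i * γ o) • f y)
    (u : ℤˣ) : IsOpen {y | 0 < u • f y} := by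
  classical
  have : {y | 0 < u • f y} = (fun y => (Pi.mulSingle i u : ι → ℤˣ) • y) ⁻¹' {y | 0 < f y} := by
    ext y
    simp only [Set.preimage_ofPred_eq, Set.mem_ofPred_eq, hodd, Pi.mulSingle_eq_same,
      Pi.mulSingle_eq_of_ne' hi, mul_one]
  rw [this]
  exact hpos.preimage (continuous_pi fun j => (continuous_apply j).const_smul _)

open Classical in
/-- The labelling of the grid by the signs of `f`, completed by `leadLabel` at the zeros. -/
def realLabel (o i : ι) (f : (ι → Sph m) → ℝ) : Chain (ι × Fin (m + 1)) := fun F =>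
  if f (gridPoint F) = 0 then leadLabel o i F else realSignBit (f (gridPoint F))

lemma realLabel_of_units_smul_pos {o i : ι} {f : (ι → Sph m) → ℝ} {u : ℤˣ}
    {F : ι × Fin (m + 1) → ℤ} (h : 0 < u • f (gridPoint F)) : realLabel o i f F = signBit u := by
  have hne : f (gridPoint F) ≠ 0 := fun h0 => by simp [h0] at h
  rw [realLabel, if_neg hne]
  rcases Int.units_eq_one_or u with rfl | rfl
  · simp [realSignBit, signBit, (one_smul ℤˣ (f (gridPoint F)) ▸ h).le]
  · have : f (gridPoint F) < 0 := by simpa using h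
    simp [realSignBit, signBit, this]

lemma isTwisted_realLabel (hK : 0 < K) {o i : ι} {f : (ι → Sph m) → ℝ}
    (hodd : ∀ (γ : ι → ℤˣ) y, f (γ • y) = (γ i * γ o) • f y) :
    IsTwisted K (signClass o i) (realLabel o i f) := by
  intro γ F hF
  have hflip : f (gridPoint (flipBlocks γ F)) = (γ i * γ o) • f (gridPoint F) := by
    rw [gridPoint_flipBlocks hK γ hF, hodd]
  by_cases h0 : f (gridPoint F) = 0
  · rw [realLabel, realLabel, if_pos (by rw [hflip, h0, smul_zero]), if_pos h0]
    exact isTwisted_leadLabel hK o i γ F hF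
  · rw [realLabel, realLabel, hflip, if_neg ((smul_ne_zero_iff_ne _).mpr h0), if_neg h0,
      realSignBit_units_smul _ h0, signClass]

theorem exists_forall_eq_zero_of_odd [Fintype ι] [DecidableEq ι] {α : Type*} [Fintype α] {o : ι}
    {c : α → ι} (hc : ∀ a, c a ≠ o) (hcard : Fintype.card α = Fintype.card ι * m)
    (hchoose : ∀ j ≠ o, Odd ((#{a | c a = j}).choose m)) {f : α → (ι → Sph m) → ℝ}
    (hpos : ∀ a, IsOpen {y | 0 < f a y})
    (hodd : ∀ a (γ : ι → ℤˣ) y, f a (γ • y) = (γ (c a) * γ o) • f a y) :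
    ∃ y, ∀ a, f a y = 0 := by
  by_contra! hne
  have hcover : Set.univ ⊆ ⋃ p : α × ℤˣ, {y | 0 < p.2 • f p.1 y} := fun y _ => by
    obtain ⟨a, ha⟩ := hne y
    rcases ha.lt_or_gt with h | h
    · exact Set.mem_iUnion.mpr ⟨(a, -1), by simpa using h⟩
    · exact Set.mem_iUnion.mpr ⟨(a, 1), by simpa using h⟩
  obtain ⟨ε, hε, hball⟩ := lebesgue_number_lemma_of_metric isCompact_univ
    (fun p : α × ℤˣ => isOpen_setOf_units_smul_pos (hc p.1) (hpos p.1) (hodd p.1) p.2) hcover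
  obtain ⟨K, hKε⟩ := exists_nat_gt ((m + 1) / ε)
  have hK : 0 < K := by
    exact_mod_cast (by positivity : (0 : ℝ) < (m + 1) / ε).trans hKε
  obtain ⟨F, hF, hfaces⟩ := exists_common_face_of_isTwisted hK hc hcard hchoose
    fun a => isTwisted_realLabel hK (hodd a)
  obtain ⟨⟨a, u⟩, hsub⟩ := hball (gridPoint F) (Set.mem_univ _)
  obtain ⟨G, G', hG, hG', hFG, hFG', hlabel⟩ := hfaces a
  have hconst {H} (hH : IsProductCell K H) (hFH : IsFace F H) :
      realLabel o (c a) (f a) H = signBit u := by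
    refine realLabel_of_units_smul_pos (hsub (Metric.mem_ball'.mpr ?_))
    exact (hFH.dist_gridPoint_le hK hF hH).trans_lt (by
      rwa [div_lt_comm₀ (by positivity) hε])
  exact hlabel ((hconst hG hFG).trans (hconst hG' hFG').symm)

end BorsukUlam

/-! ### The lower bound -/

section LowerBound

variable {m n k : ℕ}

/-- The class `signClass 0 i` of the `p`-th domain, `p : Fin n × Fin m`: each nonzero index `i` is
used `m` times for `p.1 = i`, and each of `1, …, m` once more for `p.1 = 0`. -/
def classIndex [NeZero n] (hmn : m < n) (p : Fin n × Fin m) : Fin n :=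
  if p.1 = 0 then ⟨p.2 + 1, by omega⟩ else p.1

lemma classIndex_ne_zero [NeZero n] (hmn : m < n) (p : Fin n × Fin m) : classIndex hmn p ≠ 0 := by
  rw [classIndex]
  split_ifs with h
  · simp [Fin.ext_iff]
  · exact h

lemma le_card_classIndex_eq [NeZero n] (hmn : m < n) {j : Fin n} (hj : j ≠ 0) :
    m ≤ #{p | classIndex hmn p = j} := by
  calc m = #({j} ×ˢ (univ : Finset (Fin m))) := by simp
    _ ≤ _ := card_le_card fun p hp => by
      obtain rfl : p.1 = j := (mem_singleton.mp (mem_product.mp hp).1)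
      exact mem_filter.mpr ⟨mem_univ p, if_neg hj⟩

lemma card_classIndex_eq_le [NeZero n] (hmn : m < n) (j : Fin n) :
    #{p | classIndex hmn p = j} ≤ m + 1 := by
  have hsub : ({p | classIndex hmn p = j} : Finset (Fin n × Fin m)) ⊆
      {j} ×ˢ univ ∪ {0} ×ˢ univ.filter fun b : Fin m => (b : ℕ) + 1 = j := fun p hp => by
    have hp : classIndex hmn p = j := (mem_filter.mp hp).2
    by_cases h : p.1 = 0
    · rw [classIndex, if_pos h] at hp
      simp only [mem_union, mem_product, mem_singleton, h, ← hp, mem_filter, mem_univ, and_true,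
        or_true]
    · rw [classIndex, if_neg h] at hp
      simp only [mem_union, mem_product, mem_singleton, hp, mem_univ, and_true, true_or]
  have hone : #{b : Fin m | (b : ℕ) + 1 = j} ≤ 1 := card_le_one.mpr fun a ha b hb => by
    simp only [mem_filter, mem_univ, true_and] at ha hb
    omega
  calc _ ≤ _ := (card_le_card hsub).trans (card_union_le _ _)
    _ ≤ m + 1 := by simpa using hone

lemma odd_choose_card_classIndex [NeZero n] (hme : Even m) (hmn : m < n) {j : Fin n} (hj : j ≠ 0) :
    Odd ((#{p | classIndex hmn p = j}).choose m) := by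
  obtain h | h : #{p | classIndex hmn p = j} = m ∨ #{p | classIndex hmn p = j} = m + 1 := by
    have := le_card_classIndex_eq hmn hj
    have := card_classIndex_eq_le hmn j
    omega
  · rw [h, Nat.choose_self]
    exact odd_one
  · rw [h, Nat.choose_succ_self_right]
    exact hme.add_one

theorem mul_add_one_le_of_hasPlanners (hme : Even m) (hmn : m < n) (h : HasPlanners (RP m) n k) :
    n * m + 1 ≤ k := by
  obtain ⟨U, hU, hcover, hsec⟩ := h
  by_contra! hk
  have : NeZero n := ⟨by omega⟩
  have hmem (y : Fin n → Sph m) : ∃ i, toRP ∘ y ∈ U i :=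
    Set.mem_iUnion.mp (hcover ▸ Set.mem_univ _)
  have : Nonempty (Fin k) := (hmem fun _ => basePoint m).nonempty
  obtain ⟨e⟩ : Nonempty (Fin k ↪ Fin n × Fin m) :=
    Function.Embedding.nonempty_of_card_le (by simpa using Nat.lt_succ_iff.mp hk)
  let domain : Fin n × Fin m → Fin k := Function.invFun e
  have hodd (p : Fin n × Fin m) := (hsec (domain p)).elim fun s hs =>
    exists_odd_of_section (hU (domain p)) s hs (classIndex hmn p)
  choose f hpos hsmul hne using hodd
  obtain ⟨y, hy⟩ := exists_forall_eq_zero_of_odd (classIndex_ne_zero hmn) (by simp)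
    (fun j hj => odd_choose_card_classIndex hme hmn hj) hpos hsmul
  obtain ⟨i, hi⟩ := hmem y
  obtain ⟨p, rfl⟩ := Function.invFun_surjective e.injective i
  exact hne p y hi (hy p)

end LowerBound

/-! ### The upper bound -/

section Motion

variable {m : ℕ}

lemma pathConnectedSpace_RP (hm : 1 ≤ m) : PathConnectedSpace (RP m) := by
  have hrank : 1 < Module.rank ℝ (EuclideanSpace ℝ (Fin (m + 1))) := by
    rw [← Module.finrank_eq_rank, finrank_euclideanSpace_fin]
    exact_mod_cast Nat.lt_succ_of_le hm
  have : PathConnectedSpace (Sph m) :=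
    isPathConnected_iff_pathConnectedSpace.mp (isPathConnected_sphere hrank 0 zero_le_one)
  exact isQuotientCoveringMap_toRP.isOpenQuotientMap.surjective.pathConnectedSpace
    isQuotientCoveringMap_toRP.isCoveringMap.continuous

lemma lineMap_ne_zero_of_inner_pos {E : Type*} [NormedAddCommGroup E] [InnerProductSpace ℝ E]
    {b x : E} (h : 0 < inner ℝ b x) (t : unitInterval) :
    AffineMap.lineMap b x (t : ℝ) ≠ 0 := by
  intro h0
  have hx : x ≠ 0 := by rintro rfl; simp at h
  have hmem := (convex_halfSpace_gt (𝕜 := ℝ) ((innerₗ E).flip x).isLinear 0).lineMap_mem h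
    (real_inner_self_pos.mpr hx) t.2
  simp [h0] at hmem

lemma toSphere_coe (x : Sph m) : toSphere (x : EuclideanSpace ℝ (Fin (m + 1))) = x :=
  Subtype.ext <| by
    rw [coe_toSphere (ne_zero_of_mem_unit_sphere x),
      NormedSpace.normalize_eq_self_of_norm_eq_one (norm_eq_of_mem_sphere x)]

lemma continuousOn_toSphere :
    ContinuousOn (toSphere : EuclideanSpace ℝ (Fin (m + 1)) → Sph m) {0}ᶜ := by
  refine IsInducing.subtypeVal.continuousOn_iff.mpr ?_
  have hnorm : ContinuousOn (fun v : EuclideanSpace ℝ (Fin (m + 1)) => ‖v‖⁻¹ • v) {0}ᶜ :=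
    (continuous_norm.continuousOn.inv₀ fun v hv => norm_ne_zero_iff.mpr hv).smul continuousOn_id
  exact hnorm.congr fun v hv => coe_toSphere hv

lemma toSphere_units_smul (u : ℤˣ) {v : EuclideanSpace ℝ (Fin (m + 1))} (h : v ≠ 0) :
    toSphere (u • v) = u • toSphere v := by
  rcases Int.units_eq_one_or u with rfl | rfl
  · simp only [one_smul]
  · rw [neg_one_units_smul, ← toSphere_neg h, Units.neg_smul, one_smul]

/-- The image in projective space of the great circle arc from `b / ‖b‖` to `x`. -/
def arcPath {b : EuclideanSpace ℝ (Fin (m + 1))} {x : Sph m} (h : 0 < inner ℝ b x.1) :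
    Path (toRP (toSphere b)) (toRP x) where
  toFun t := toRP (toSphere (AffineMap.lineMap b x.1 (t : ℝ)))
  continuous_toFun := isQuotientCoveringMap_toRP.isCoveringMap.continuous.comp <|
    continuousOn_toSphere.comp_continuous (by fun_prop) (lineMap_ne_zero_of_inner_pos h)
  source' := by simp
  target' := by simp [toSphere_coe]

variable [PathConnectedSpace (RP m)]

open Classical in
/-- A motion from the base point to `x`, first along a path depending only on the direction `±b`,
then along the arc from `b` to `x`; constant when `b` and `x` do not span an acute angle. -/
def motion (b : EuclideanSpace ℝ (Fin (m + 1))) (x : Sph m) : C(unitInterval, RP m) :=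
  if h : 0 < inner ℝ b x.1 then
    ((PathConnectedSpace.somePath (toRP (basePoint m)) (toRP (toSphere b))).trans
      (arcPath h)).toContinuousMap
  else .const _ (toRP (basePoint m))

lemma motion_zero (b : EuclideanSpace ℝ (Fin (m + 1))) (x : Sph m) :
    motion b x 0 = toRP (basePoint m) := by
  rw [motion]
  split_ifs
  · exact Path.source _
  · rfl

lemma motion_one {b : EuclideanSpace ℝ (Fin (m + 1))} {x : Sph m} (h : 0 < inner ℝ b x.1) :
    motion b x 1 = toRP x := by
  rw [motion, dif_pos h]
  exact Path.target _

lemma motion_units_smul (u : ℤˣ) (b : EuclideanSpace ℝ (Fin (m + 1))) (x : Sph m) :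
    motion (u • b) (u • x) = motion b x := by
  have hinner : inner ℝ (u • b) (u • x : Sph m).1 = inner ℝ b x.1 := by
    rw [coe_units_smul, inner_units_smul, Int.units_mul_self, one_smul]
  by_cases h : 0 < inner ℝ b x.1
  · have hb : b ≠ 0 := by rintro rfl; simp at h
    have hstart (t : unitInterval) :
        PathConnectedSpace.somePath (toRP (basePoint m)) (toRP (toSphere (u • b))) t =
          PathConnectedSpace.somePath (toRP (basePoint m)) (toRP (toSphere b)) t := by
      rw [toSphere_units_smul u hb, toRP_units_smul]
    have harc (t : unitInterval) : arcPath (hinner ▸ h) t = arcPath h t := by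
      change toRP (toSphere (AffineMap.lineMap (u • b) (u • x.1) (t : ℝ))) = _
      rw [AffineMap.lineMap_apply_module, smul_comm _ u, smul_comm _ u, ← smul_add,
        ← AffineMap.lineMap_apply_module,
        toSphere_units_smul u (lineMap_ne_zero_of_inner_pos h t), toRP_units_smul]
      rfl
    ext t
    rw [motion, motion, dif_pos h, dif_pos (hinner ▸ h)]
    simp only [Path.coe_toContinuousMap, Path.trans_apply, harc, hstart]
  · rw [motion, motion, dif_neg h, dif_neg (hinner ▸ h)]

lemma continuousAt_motion {b : EuclideanSpace ℝ (Fin (m + 1))} {x : Sph m}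
    (h : 0 < inner ℝ b x.1) : ContinuousAt (motion b) x := by
  let H : Set (Sph m) := {x | 0 < inner ℝ b x.1}
  have hH : IsOpen H := isOpen_lt continuous_const (by fun_prop)
  have harc : Continuous ↿fun x : H => arcPath x.2 :=
    isQuotientCoveringMap_toRP.isCoveringMap.continuous.comp <|
      continuousOn_toSphere.comp_continuous (by fun_prop)
        fun p => lineMap_ne_zero_of_inner_pos p.1.2 p.2
  have hmotion := Path.trans_continuous_family
    (fun _ : H => PathConnectedSpace.somePath (toRP (basePoint m)) (toRP (toSphere b)))
    ((Path.continuous _).comp continuous_snd) _ harc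
  refine ContinuousOn.continuousAt (continuousOn_iff_continuous_domRestrict.mpr ?_)
    (hH.mem_nhds h)
  refine (ContinuousMap.curry ⟨_, hmotion⟩).continuous.congr fun x => ?_
  rw [Set.domRestrict_apply, motion, dif_pos (show 0 < inner ℝ b x.1.1 from x.2)]
  rfl

end Motion

section SignVector

variable {m : ℕ} {T : Finset (Fin (m + 1))} {x : Sph m}

/-- The vector of signs of the coordinates of `x` in `T`. -/
def signVector (T : Finset (Fin (m + 1))) (x : Sph m) : EuclideanSpace ℝ (Fin (m + 1)) :=
  WithLp.toLp 2 fun a => if a ∈ T then ((SignType.sign (x.1 a) : SignType) : ℝ) else 0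

lemma signVector_units_smul (u : ℤˣ) (T : Finset (Fin (m + 1))) (x : Sph m) :
    signVector T (u • x) = u • signVector T x := by
  rcases Int.units_eq_one_or u with rfl | rfl
  · simp only [one_smul]
  · ext a
    by_cases ha : a ∈ T <;> simp [signVector, ha, Left.sign_neg]

lemma inner_signVector_pos (hT : T.Nonempty) (hx : ∀ a ∈ T, x.1 a ≠ 0) :
    0 < inner ℝ (signVector T x) x.1 := by
  have hinner : inner ℝ (signVector T x) x.1 = ∑ a ∈ T, |x.1 a| := by
    simp [PiLp.inner_apply, signVector, Finset.sum_ite_mem, mul_comm]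
  exact hinner ▸ Finset.sum_pos (fun a ha => abs_pos.mpr (hx a ha)) hT

lemma eventually_signVector_eq (hx : ∀ a ∈ T, x.1 a ≠ 0) :
    ∀ᶠ z in 𝓝 x, signVector T z = signVector T x := by
  have hsign (a : Fin (m + 1)) (ha : a ∈ T) :
      ∀ᶠ z : Sph m in 𝓝 x, SignType.sign (z.1 a) = SignType.sign (x.1 a) := by
    have hcont : ContinuousAt (fun z : Sph m => SignType.sign (z.1 a)) x :=
      (continuousAt_sign_of_ne_zero (hx a ha)).comp (f := fun z : Sph m => z.1 a)
        (Continuous.continuousAt (by fun_prop))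
    exact hcont.eventually_mem ((isOpen_discrete {SignType.sign (x.1 a)}).mem_nhds rfl)
  filter_upwards [(Filter.eventually_all_finset T).mpr hsign] with z hz
  ext a
  by_cases ha : a ∈ T <;> simp [signVector, ha, hz]

end SignVector

section Strata

variable {m n k : ℕ} {y : Fin n → Sph m} {S T : Fin n → Finset (Fin (m + 1))}

/-- `S` singles out the `n + k` largest absolute coordinates of the tuple `y`, all of them nonzero
and strictly larger than the remaining ones, with at least one from each entry of `y`. -/
def IsTop (k : ℕ) (y : Fin n → Sph m) (S : Fin n → Finset (Fin (m + 1))) : Prop :=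
  (∀ i, (S i).Nonempty) ∧ ∑ i, #(S i) = n + k ∧
    ∀ i, ∀ a ∈ S i, 0 < |(y i).1 a| ∧ ∀ j, ∀ b ∉ S j, |(y j).1 b| < |(y i).1 a|

lemma IsTop.le (hS : IsTop k y S) (hT : IsTop k y T) : S ≤ T := by
  by_contra hST
  obtain ⟨i, a, haS, haT⟩ : ∃ i, ∃ a ∈ S i, a ∉ T i := by
    simpa only [Pi.le_def, Finset.not_subset, not_forall] using hST
  have hTS (j : Fin n) : T j ⊆ S j := fun b hb => by
    by_contra hbS
    exact lt_asymm ((hS.2.2 i a haS).2 j b hbS) ((hT.2.2 j b hb).2 i a haT)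
  have hcard : ∑ j, #(T j) < ∑ j, #(S j) :=
    Finset.sum_lt_sum (fun j _ => Finset.card_le_card (hTS j))
      ⟨i, mem_univ i, Finset.card_lt_card ⟨hTS i, fun h => haT (h haS)⟩⟩
  exact hcard.ne (hT.2.1.trans hS.2.1.symm)

lemma IsTop.unique (hS : IsTop k y S) (hT : IsTop k y T) : S = T :=
  le_antisymm (hS.le hT) (hT.le hS)

lemma IsTop.ne_zero (hS : IsTop k y S) (i : Fin n) : ∀ a ∈ S i, (y i).1 a ≠ 0 :=
  fun a ha => abs_pos.mp (hS.2.2 i a ha).1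

lemma IsTop.inner_signVector_pos (hS : IsTop k y S) (i : Fin n) :
    0 < inner ℝ (signVector (S i) (y i)) (y i).1 :=
  HigherTC.inner_signVector_pos (hS.1 i) (hS.ne_zero i)

lemma isTop_units_smul_iff (γ : Fin n → ℤˣ) : IsTop k (γ • y) S ↔ IsTop k y S := by
  have habs (i : Fin n) (a : Fin (m + 1)) : |((γ • y) i).1 a| = |(y i).1 a| := by
    rcases Int.units_eq_one_or (γ i) with h | h <;> simp [h]
  simp only [IsTop, habs]

lemma IsTop.permTuple (hS : IsTop k y S) (sg : Equiv.Perm (Fin n)) :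
    IsTop k (permTuple sg y) (permTuple sg S) := by
  refine ⟨fun i => hS.1 (sg i), ?_, fun i a ha => ⟨(hS.2.2 (sg i) a ha).1, fun j b hb => ?_⟩⟩
  · exact (Equiv.sum_comp sg fun i => #(S i)).trans hS.2.1
  · exact (hS.2.2 (sg i) a ha).2 (sg j) b hb

lemma isOpen_setOf_isTop (k : ℕ) (S : Fin n → Finset (Fin (m + 1))) :
    IsOpen {y : Fin n → Sph m | IsTop k y S} := by
  have habs (i : Fin n) (a : Fin (m + 1)) :
      Continuous fun y : Fin n → Sph m => |(y i).1 a| := by fun_prop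
  simp only [IsTop, Set.ofPred_and]
  refine .inter isOpen_const (.inter isOpen_const ?_)
  simp only [Set.ofPred_forall, Set.ofPred_and]
  refine isOpen_iInter_of_finite fun i => isOpen_iInter_of_finite fun a =>
    isOpen_iInter_of_finite fun _ => .inter (isOpen_lt continuous_const (habs i a)) ?_
  exact isOpen_iInter_of_finite fun j => isOpen_iInter_of_finite fun b =>
    isOpen_iInter_of_finite fun _ => isOpen_lt (habs j b) (habs i a)

lemma exists_isTop (y : Fin n → Sph m) : ∃ k : Fin (n * m + 1), ∃ S, IsTop k y S := by
  let S (i : Fin n) : Finset (Fin (m + 1)) := {a | 0 < |(y i).1 a|}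
  have hne (i : Fin n) : (S i).Nonempty := by
    obtain ⟨a, ha⟩ : ∃ a, (y i).1 a ≠ 0 := by
      by_contra! h
      exact ne_zero_of_mem_unit_sphere (y i) (PiLp.ext h)
    exact ⟨a, by simpa [S] using ha⟩
  have hge : n ≤ ∑ i, #(S i) := by
    simpa using Finset.sum_le_sum fun i (_ : i ∈ univ) => Finset.one_le_card.mpr (hne i)
  have hle : ∑ i, #(S i) ≤ n * m + n := by
    simpa [mul_add] using Finset.sum_le_sum fun i (_ : i ∈ univ) => Finset.card_le_univ (S i)
  refine ⟨⟨∑ i, #(S i) - n, by omega⟩, S, hne, by simp only; omega, fun i a ha => ?_⟩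
  have hpos : 0 < |(y i).1 a| := (mem_filter.mp ha).2
  refine ⟨hpos, fun j b hb => lt_of_le_of_lt ?_ hpos⟩
  exact not_lt.mp fun h => hb (mem_filter.mpr ⟨mem_univ b, h⟩)

/-- The support `S` with `IsTop k y S`; arbitrary if there is none. -/
def topSupport (k : ℕ) (y : Fin n → Sph m) : Fin n → Finset (Fin (m + 1)) :=
  Classical.epsilon (IsTop k y)

lemma IsTop.topSupport_eq (hS : IsTop k y S) : topSupport k y = S :=
  (Classical.epsilon_spec (p := IsTop k y) ⟨S, hS⟩).unique hS

lemma topSupport_units_smul (γ : Fin n → ℤˣ) (y : Fin n → Sph m) :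
    topSupport k (γ • y) = topSupport k y := by
  have hiff : IsTop k (γ • y) = IsTop k y := funext fun _ => propext (isTop_units_smul_iff γ)
  rw [topSupport, hiff, topSupport]

/-- A choice of lift to the spheres of a tuple of points of projective space. -/
def liftTuple (x : Fin n → RP m) (i : Fin n) : Sph m :=
  Function.surjInv isQuotientCoveringMap_toRP.isOpenQuotientMap.surjective (x i)

lemma toRP_comp_liftTuple (x : Fin n → RP m) : toRP ∘ liftTuple x = x :=
  funext fun i => Function.surjInv_eq _ (x i)

lemma exists_liftTuple_eq_units_smul (y : Fin n → Sph m) :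
    ∃ γ : Fin n → ℤˣ, liftTuple (toRP ∘ y) = γ • y := by
  have horbit (i : Fin n) : liftTuple (toRP ∘ y) i ∈ MulAction.orbit ℤˣ (y i) :=
    toRP_eq_iff_mem_orbit.mp (congrFun (toRP_comp_liftTuple (toRP ∘ y)) i)
  choose γ hγ using horbit
  exact ⟨γ, funext fun i => (hγ i).symm⟩

lemma isOpenQuotientMap_toRP_comp :
    IsOpenQuotientMap fun y : Fin n → Sph m => toRP ∘ y :=
  IsOpenQuotientMap.piMap fun _ => isQuotientCoveringMap_toRP.isOpenQuotientMap

/-- The tuples with a strict gap after their `n + k` largest absolute coordinates, as in `IsTop`. -/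
def stratum (m n k : ℕ) : Set (Fin n → RP m) := {x | ∃ S, IsTop k (liftTuple x) S}

lemma toRP_comp_mem_stratum_iff : toRP ∘ y ∈ stratum m n k ↔ ∃ S, IsTop k y S := by
  obtain ⟨γ, hγ⟩ := exists_liftTuple_eq_units_smul y
  simp only [stratum, Set.mem_ofPred_eq, hγ, isTop_units_smul_iff]

lemma isOpen_stratum (m n k : ℕ) : IsOpen (stratum m n k) := by
  have hpreimage : (fun y : Fin n → Sph m => toRP ∘ y) ⁻¹' stratum m n k =
      ⋃ S, {y | IsTop k y S} := by
    ext y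
    simp only [Set.mem_preimage, toRP_comp_mem_stratum_iff, Set.mem_iUnion, Set.mem_ofPred_eq]
  rw [← isOpenQuotientMap_toRP_comp.isQuotientMap.isOpen_preimage, hpreimage]
  exact isOpen_iUnion (isOpen_setOf_isTop k)

end Strata

section UpperBound

variable {m n k : ℕ} [PathConnectedSpace (RP m)] {y : Fin n → Sph m}
  {S : Fin n → Finset (Fin (m + 1))}

/-- The tuple of motions on the `k`-th stratum, for lifts `y` of the points to the sphere. -/
def planner (k : ℕ) (y : Fin n → Sph m) (i : Fin n) : C(unitInterval, RP m) :=
  motion (signVector (topSupport k y i) (y i)) (y i)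

lemma planner_units_smul (γ : Fin n → ℤˣ) (y : Fin n → Sph m) :
    planner k (γ • y) = planner k y := by
  ext1 i
  rw [planner, planner, topSupport_units_smul, Pi.smul_apply', signVector_units_smul,
    motion_units_smul]

lemma IsTop.planner_permTuple (hS : IsTop k y S) (sg : Equiv.Perm (Fin n)) :
    planner k (_root_.permTuple sg y) = _root_.permTuple sg (planner k y) := by
  ext1 i
  simp only [_root_.permTuple, planner]
  rw [hS.topSupport_eq, (hS.permTuple sg).topSupport_eq]
  rfl

lemma IsTop.continuousAt_planner (hS : IsTop k y S) : ContinuousAt (planner k) y := by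
  refine continuousAt_pi.mpr fun i => ?_
  have hmotion : ContinuousAt (fun z : Fin n → Sph m => motion (signVector (S i) (y i)) (z i)) y :=
    (continuousAt_motion (hS.inner_signVector_pos i)).comp (f := fun z : Fin n → Sph m => z i)
      (continuous_apply i).continuousAt
  refine hmotion.congr ?_
  have hsign : ∀ᶠ z in 𝓝 y, signVector (S i) (z i) = signVector (S i) (y i) :=
    (continuous_apply i).continuousAt.eventually (eventually_signVector_eq (hS.ne_zero i))
  filter_upwards [hsign, (isOpen_setOf_isTop k S).mem_nhds hS] with z hz hzS
  rw [planner, IsTop.topSupport_eq hzS, hz]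

lemma IsTop.planner_one (hS : IsTop k y S) (i : Fin n) : planner k y i 1 = toRP (y i) := by
  rw [planner, hS.topSupport_eq, motion_one (hS.inner_signVector_pos i)]

lemma continuousAt_planner_liftTuple {x : Fin n → RP m} (hx : x ∈ stratum m n k) :
    ContinuousAt (fun x => planner k (liftTuple x)) x := by
  obtain ⟨S, hS⟩ := hx
  have hcomp : (fun x => planner k (liftTuple x)) ∘ (toRP ∘ ·) = planner (m := m) (n := n) k := by
    ext1 y
    obtain ⟨γ, hγ⟩ := exists_liftTuple_eq_units_smul y
    exact (congrArg (planner k) hγ).trans (planner_units_smul γ y)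
  rw [← toRP_comp_liftTuple x, ← isOpenQuotientMap_toRP_comp.continuousAt_comp_iff, hcomp]
  exact hS.continuousAt_planner

end UpperBound

theorem hasSymPlanners_RP {m : ℕ} (n : ℕ) (hm : 1 ≤ m) :
    HasSymPlanners (RP m) n (n * m + 1) := by
  have := pathConnectedSpace_RP hm
  refine ⟨fun k => stratum m n k, fun k => isOpen_stratum m n k, ?_, ?_, fun k => ?_⟩
  · exact Set.eq_univ_of_forall fun x => Set.mem_iUnion.mpr (exists_isTop (liftTuple x))
  · rintro k sg x ⟨S, hS⟩
    exact ⟨_, hS.permTuple sg⟩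
  · refine ⟨⟨fun x => planner k (liftTuple x.1), ?_⟩, fun x j j' => ?_, fun x j => ?_, ?_⟩
    · exact continuous_iff_continuousAt.mpr fun x =>
        (continuousAt_planner_liftTuple x.2).comp continuous_subtype_val.continuousAt
    · exact (motion_zero _ _).trans (motion_zero _ _).symm
    · obtain ⟨S, hS⟩ := x.2
      exact (hS.planner_one j).trans (congrFun (toRP_comp_liftTuple x.1) j)
    · rintro ⟨x, S, hS⟩ sg -
      exact hS.planner_permTuple sg

/-! ### Comparison of planners -/

section Comparison

variable {X : Type*} [TopologicalSpace X] {n k : ℕ}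

/-- The distance from the index `j` to the parameter `(n - 1) t`, which is `j` at `evalPt n j`. -/
def indexDist (n : ℕ) (j : Fin n) (t : unitInterval) : ℝ := |(t : ℝ) * (n - 1) - j|

lemma continuous_indexDist (n : ℕ) (j : Fin n) : Continuous (indexDist n j) := by
  unfold indexDist
  fun_prop

lemma indexDist_evalPt (j : Fin n) : indexDist n j (evalPt n j) = 0 := by
  have hj : (n : ℝ) - 1 = 0 → ((j : ℕ) : ℝ) = 0 := fun h => by
    have hn : n = 1 := by exact_mod_cast sub_eq_zero.mp h
    exact_mod_cast (by omega : (j : ℕ) = 0)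
  rw [indexDist, evalPt, div_mul_cancel_of_imp hj, sub_self, abs_zero]

lemma indexDist_rev_symm (j : Fin n) (t : unitInterval) :
    indexDist n j.rev (unitInterval.symm t) = indexDist n j t := by
  rw [indexDist, indexDist, unitInterval.coe_symm_eq, Fin.val_rev, Nat.cast_sub j.isLt, ← abs_neg]
  congr 1
  push_cast
  ring

lemma exists_indexDist_le [NeZero n] (t : unitInterval) : ∃ j, indexDist n j t ≤ 1 / 2 := by
  have hn : (1 : ℝ) ≤ n := by exact_mod_cast NeZero.one_le
  have hu₀ : 0 ≤ (t : ℝ) * (n - 1) := mul_nonneg t.2.1 (by linarith)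
  have hu₁ : (t : ℝ) * (n - 1) ≤ n - 1 := mul_le_of_le_one_left (by linarith) t.2.2
  have hle := Nat.floor_le (by linarith : 0 ≤ (t : ℝ) * (n - 1) + 1 / 2)
  have hlt := Nat.lt_floor_add_one ((t : ℝ) * (n - 1) + 1 / 2)
  have hfloor : ⌊(t : ℝ) * (n - 1) + 1 / 2⌋₊ < n := by
    rw [← Nat.cast_lt (α := ℝ)]
    linarith
  exact ⟨⟨_, hfloor⟩, abs_le.mpr ⟨by simp only; linarith, by simp only; linarith⟩⟩

lemma one_le_indexDist_add {j j' : Fin n} (hne : j ≠ j') (t : unitInterval) :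
    1 ≤ indexDist n j t + indexDist n j' t := by
  have hint : (1 : ℤ) ≤ |(j : ℤ) - j'| := Int.one_le_abs (by omega)
  calc (1 : ℝ) ≤ |(j : ℝ) - j'| := by exact_mod_cast hint
    _ ≤ |(j : ℝ) - t * (n - 1)| + |(t : ℝ) * (n - 1) - j'| := abs_sub_le _ _ _
    _ = _ := by rw [abs_sub_comm (j : ℝ)]; rfl

/-- The path which traverses `p 0` backwards, then each of `p 1, …, p (n - 2)` forwards and
backwards, and finally `p (n - 1)` forwards; a path when the `p j` have a common initial point. -/
def sweep [NeZero n] (p : Fin n → C(unitInterval, X)) (t : unitInterval) : X :=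
  p (exists_indexDist_le t).choose
    (Set.projIcc 0 1 zero_le_one (1 - 2 * indexDist n (exists_indexDist_le t).choose t))

lemma sweep_eq [NeZero n] {p : Fin n → C(unitInterval, X)} (hp : ∀ j j', p j 0 = p j' 0)
    {t : unitInterval} {j : Fin n} (hj : indexDist n j t ≤ 1 / 2) :
    sweep p t = p j (Set.projIcc 0 1 zero_le_one (1 - 2 * indexDist n j t)) := by
  have hchoose := (exists_indexDist_le (n := n) t).choose_spec
  by_cases heq : (exists_indexDist_le (n := n) t).choose = j
  · rw [sweep, heq]
  · have hsum := one_le_indexDist_add heq t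
    rw [sweep, Set.projIcc_of_le_left _ (by linarith), Set.projIcc_of_le_left _ (by linarith)]
    exact hp _ _

lemma continuous_sweep [NeZero n] {Y : Type*} [TopologicalSpace Y]
    {s : Y → Fin n → C(unitInterval, X)} (hs : Continuous s) (hs₀ : ∀ y j j', s y j 0 = s y j' 0) :
    Continuous fun q : Y × unitInterval => sweep (s q.1) q.2 := by
  have hdist (j : Fin n) : Continuous fun q : Y × unitInterval => indexDist n j q.2 :=
    (continuous_indexDist n j).comp continuous_snd
  refine LocallyFinite.continuous (f := fun j => {q : Y × unitInterval | indexDist n j q.2 ≤ 1 / 2})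
    (locallyFinite_of_finite _) ?_ (fun j => isClosed_le (hdist j) continuous_const) fun j => ?_
  · exact Set.eq_univ_of_forall fun q => Set.mem_iUnion.mpr (exists_indexDist_le q.2)
  · have hpath : Continuous fun q : Y × unitInterval =>
        s q.1 j (Set.projIcc 0 1 zero_le_one (1 - 2 * indexDist n j q.2)) :=
      .eval ((continuous_apply j).comp (hs.comp continuous_fst))
        (continuous_projIcc.comp (continuous_const.sub (continuous_const.mul (hdist j))))
    exact hpath.continuousOn.congr fun q hq => sweep_eq (hs₀ q.1) hq

lemma sweep_evalPt [NeZero n] {p : Fin n → C(unitInterval, X)} (hp : ∀ j j', p j 0 = p j' 0)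
    (j : Fin n) : sweep p (evalPt n j) = p j 1 := by
  have hj : indexDist n j (evalPt n j) ≤ 1 / 2 := by simp [indexDist_evalPt]
  rw [sweep_eq hp hj, indexDist_evalPt, mul_zero, sub_zero, Set.projIcc_right]
  rfl

lemma sweep_rtuple [NeZero n] {p : Fin n → C(unitInterval, X)} (hp : ∀ j j', p j 0 = p j' 0)
    (t : unitInterval) : sweep (rtuple p) t = sweep p (unitInterval.symm t) := by
  obtain ⟨j, hj⟩ := exists_indexDist_le (n := n) t
  have hrev := indexDist_rev_symm j t
  rw [sweep_eq (p := rtuple p) (fun i i' => hp i.rev i'.rev) hj,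
    sweep_eq hp (hrev.trans_le hj), hrev]
  rfl

theorem hasBidirPlanners_of_hasSymPlanners [NeZero n] (h : HasSymPlanners X n k) :
    HasBidirPlanners X n k := by
  obtain ⟨U, hU, hcover, hperm, hs⟩ := h
  refine ⟨U, hU, hcover, fun i => hperm i Fin.revPerm, fun i => ?_⟩
  obtain ⟨s, hs₀, hs₁, hsperm⟩ := hs i
  refine ⟨.curry ⟨_, continuous_sweep s.continuous hs₀⟩, fun x j => ?_, fun x hx => ?_⟩
  · exact (sweep_evalPt (hs₀ x) j).trans (hs₁ x j)
  · ext t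
    exact (congrArg (sweep · t) (hsperm x Fin.revPerm hx)).trans (sweep_rtuple (hs₀ x) t)

theorem hasPlanners_of_hasBidirPlanners (h : HasBidirPlanners X n k) : HasPlanners X n k := by
  obtain ⟨U, hU, hcover, -, hs⟩ := h
  exact ⟨U, hU, hcover, fun i => (hs i).imp fun _ => And.left⟩

lemma sInf_coe_eq_of_forall_le {P : ℕ → Prop} {N : ℕ} (h : P N) (hl : ∀ k, P k → N ≤ k) :
    sInf {k : ℕ∞ | ∃ m : ℕ, (m : ℕ∞) = k ∧ P m} = N := by
  refine IsLeast.csInf_eq ⟨⟨N, rfl, h⟩, ?_⟩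
  rintro _ ⟨k, rfl, hk⟩
  exact_mod_cast hl k hk

end Comparison

end

end HigherTC

/-- For every even `m ≥ 2` and every `n > m`,
`TC_n(ℝP^m) = TC^β_n(ℝP^m) = TC^Σ_n(ℝP^m) = nm + 1`. -/
theorem TC_TCbeta_TCsym_projective_space (m n : ℕ) (hm : 2 ≤ m) (hme : Even m)
    (hmn : m < n) :
    TCn (RP m) n = ((n * m + 1 : ℕ) : ℕ∞) ∧
    TCbeta (RP m) n = ((n * m + 1 : ℕ) : ℕ∞) ∧
    TCsym (RP m) n = ((n * m + 1 : ℕ) : ℕ∞) := by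
  have : NeZero n := ⟨by omega⟩
  have hsym : HasSymPlanners (RP m) n (n * m + 1) := HigherTC.hasSymPlanners_RP n (by omega)
  have hbidir : HasBidirPlanners (RP m) n (n * m + 1) :=
    HigherTC.hasBidirPlanners_of_hasSymPlanners hsym
  have hplain : HasPlanners (RP m) n (n * m + 1) := HigherTC.hasPlanners_of_hasBidirPlanners hbidir
  have hlower (k : ℕ) (h : HasPlanners (RP m) n k) : n * m + 1 ≤ k :=
    HigherTC.mul_add_one_le_of_hasPlanners hme hmn h
  have hlower_bidir (k : ℕ) (h : HasBidirPlanners (RP m) n k) : n * m + 1 ≤ k :=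
    hlower k (HigherTC.hasPlanners_of_hasBidirPlanners h)
  have hlower_sym (k : ℕ) (h : HasSymPlanners (RP m) n k) : n * m + 1 ≤ k :=
    hlower_bidir k (HigherTC.hasBidirPlanners_of_hasSymPlanners h)
  exact ⟨HigherTC.sInf_coe_eq_of_forall_le hplain hlower,
    HigherTC.sInf_coe_eq_of_forall_le hbidir hlower_bidir,
    HigherTC.sInf_coe_eq_of_forall_le hsym hlower_sym⟩
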